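/- arXiv:1009.1368 — 2 statements merged into one kernel-verified Lean document; each statement's English description precedes it below -/
import Mathlib

section
/- Let X, Y, A be positive integers and let α be a real number with a rational approximation of denominator q. Suppose that for some B > 0 we have X·Y·B^{−1} > q > B. Then for all but O( Y·( A^{3/2}·B^{−1/2} + A²·B^{−1} + log(A·Y)·A³·X^{−1} ) ) of the integers n with 1 ≤ n ≤ Y, the number n·α has a rational approximation with denominator q′ for some q′ satisfying X·A^{−1} > q′ > A. The implied constant is absolute. -/
/-!
The bound holds even without the term `A^{3/2} B^{-1/2}`, and of the logarithm only the lower bound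
`log (A Y) ≥ 1 / 2` is needed; the case `A = Y = 1`, where it vanishes, is checked directly. The case
`X ≤ A` is trivial, so let `X > A`.

If `n` is exceptional, Dirichlet's theorem at level about `X / A` produces a denominator `r < X / A`,
which must then satisfy `r ≤ A`; hence `m = r n ≤ A Y` has `m α` within `A / X` of an integer.
Each `m` arises from at most one `n` for each `r ≤ A`, so it suffices to count the
`1 ≤ m ≤ A Y` whose multiple `m α` is within `δ = A / X` of an integer.

Since `α` is close to a reduced fraction of denominator `q`, the numbers `d α` with `1 ≤ d ≤ q / 2`
are at distance at least `1 / (2 q)` from the integers (`sep_of_hasRatApprox`). So among at most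
`q / 2 + 1` consecutive integers `m` the residues of `m α` modulo `1` are `1 / (2 q)`-spaced, and at
most `4 q δ + 2` of them are within `δ` of an integer (`card_block_le`). In the block starting at
`m = 0` the trivial solution `m = 0` is left out, and the count improves to `8 q δ`; this is what
avoids an additive constant in `card_near_le`, which would be too large when `A Y < q`.
-/


/-- `α` has a rational approximation with denominator `q`: there are relatively prime
integers `a` and `q` with `|α − a/q| < 1/q²`. -/
def HasRatApprox (α : ℝ) (q : ℕ) : Prop :=
  ∃ a : ℤ, Int.gcd a (q : ℤ) = 1 ∧ |α - (a : ℝ) / q| < 1 / (q : ℝ) ^ 2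

/-- Multiples `d α` with `1 ≤ d ≤ q / 2` stay away from the integers by at least `1 / (2 q)`. -/
lemma sep_of_hasRatApprox {α : ℝ} {q : ℕ} (h : HasRatApprox α q) (d : ℕ) (hd : 0 < d)
    (hdq : d ≤ q / 2) (k : ℤ) : 1 / (2 * (q : ℝ)) ≤ |d * α - k| := by
  obtain ⟨a, hg, ha⟩ := h
  have hq : 0 < q := by omega
  have hqR : (0 : ℝ) < q := by exact_mod_cast hq
  have hne : (d : ℤ) * a - k * q ≠ 0 := by
    intro h0
    have hdvd : (q : ℤ) ∣ a * d := ⟨k, by linarith⟩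
    have hdvd' : (q : ℤ) ∣ d :=
      Int.dvd_of_dvd_mul_right_of_gcd_one hdvd (by rwa [Int.gcd_comm])
    have := Nat.le_of_dvd hd (Int.natCast_dvd_natCast.mp hdvd')
    omega
  have h1 : (1 : ℝ) ≤ |(d : ℝ) * a - k * q| := by
    exact_mod_cast Int.one_le_abs hne
  have h2 : 1 / (q : ℝ) ≤ |(d : ℝ) * (a / q) - k| := by
    have : (d : ℝ) * (a / q) - k = (d * a - k * q) / q := by field_simp
    rw [this, abs_div, abs_of_pos hqR]
    gcongr
  have h3 : |(d : ℝ) * (α - a / q)| ≤ 1 / (2 * (q : ℝ)) := by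
    rw [abs_mul, abs_of_nonneg (by positivity : (0 : ℝ) ≤ d)]
    have hd2 : (d : ℝ) * 2 ≤ q := by
      have : d * 2 ≤ q := by omega
      exact_mod_cast this
    calc (d : ℝ) * |α - a / q| ≤ (q / 2) * (1 / (q : ℝ) ^ 2) := by
          gcongr
          linarith
      _ = 1 / (2 * (q : ℝ)) := by field_simp
  have h4 : (d : ℝ) * (a / q) - k = (d * α - k) - d * (α - a / q) := by ring
  have h5 := abs_sub ((d : ℝ) * α - k) (d * (α - a / q))
  rw [← h4] at h5
  have h6 : 1 / (q : ℝ) = 1 / (2 * (q : ℝ)) + 1 / (2 * (q : ℝ)) := by field_simp; norm_num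
  linarith

/-- In a set of integers of diameter at most `q / 2`, all of whose multiples of `α` are within `δ`
of an integer, there are at most `4 q δ + 2` elements. -/
lemma card_block_le {α : ℝ} {q : ℕ} (hq : 0 < q) (h : HasRatApprox α q) {δ : ℝ} (hδ : 0 ≤ δ)
    (S : Finset ℕ) (hS : ∀ m ∈ S, ∀ m' ∈ S, m - m' ≤ q / 2)
    (hδS : ∀ m ∈ S, |(m : ℝ) * α - round ((m : ℝ) * α)| ≤ δ) :
    (S.card : ℝ) ≤ 4 * q * δ + 2 := by
  have hqR : (0 : ℝ) < q := by exact_mod_cast hq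
  -- Each cell `f m = const`, of length `1 / (2 q)`, contains at most one residue `m α - round (m α)`.
  let f : ℕ → ℤ := fun m => ⌊2 * q * ((m : ℝ) * α - round ((m : ℝ) * α))⌋
  have hmaps : ∀ m ∈ S, f m ∈ Finset.Icc ⌊-(2 * q * δ)⌋ ⌊2 * q * δ⌋ := by
    intro m hm
    have := abs_le.mp (hδS m hm)
    rw [Finset.mem_Icc]
    constructor
    · apply Int.floor_le_floor
      nlinarith
    · apply Int.floor_le_floor
      nlinarith
  have hlt : ∀ m ∈ S, ∀ m' ∈ S, f m = f m' → ¬ m' < m := by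
    intro m hm m' hm' hf hlt
    have h1 := Int.abs_sub_lt_one_of_floor_eq_floor hf
    have h2 := sep_of_hasRatApprox h (m - m') (by omega) (hS m hm m' hm')
      (round ((m : ℝ) * α) - round ((m' : ℝ) * α))
    rw [Nat.cast_sub hlt.le] at h2
    push_cast at h2
    rw [← mul_sub, abs_mul, abs_of_pos (by positivity)] at h1
    rw [div_le_iff₀ (by positivity)] at h2
    have h3 : ((m : ℝ) - m') * α - (round ((m : ℝ) * α) - round ((m' : ℝ) * α))
      = (m : ℝ) * α - round ((m : ℝ) * α) - (m' * α - round ((m' : ℝ) * α)) := by ring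
    rw [h3] at h2
    linarith
  have hinj : Set.InjOn f S := by
    intro m hm m' hm' hf
    have h1 := hlt m hm m' hm' hf
    have h2 := hlt m' hm' m hm hf.symm
    omega
  have hc := Finset.card_le_card_of_injOn f hmaps hinj
  rw [Int.card_Icc] at hc
  have h1 := Int.lt_floor_add_one (-(2 * q * δ))
  have h2 := Int.floor_le (2 * q * δ)
  have h3 : ⌊-(2 * q * δ)⌋ ≤ ⌊2 * q * δ⌋ := by
    apply Int.floor_le_floor
    have : 0 ≤ 2 * q * δ := by positivity
    linarith
  have h4 : (S.card : ℤ) ≤ ⌊2 * q * δ⌋ + 1 - ⌊-(2 * q * δ)⌋ := by omega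
  have h5 : (S.card : ℝ) ≤ ⌊2 * q * δ⌋ + 1 - ⌊-(2 * q * δ)⌋ := by exact_mod_cast h4
  linarith

/-- The number of `1 ≤ m ≤ M` with `m α` within `δ` of an integer, without an additive constant. -/
lemma card_near_le {α : ℝ} {q : ℕ} (hq : 0 < q) (h : HasRatApprox α q) {δ : ℝ} (hδ : 0 ≤ δ)
    (M : ℕ) :
    (((Finset.Icc 1 M).filter
      (fun m : ℕ => |(m : ℝ) * α - round ((m : ℝ) * α)| ≤ δ)).card : ℝ) ≤
      8 * q * δ + 8 * M * δ + 4 * M / q := by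
  have hqR : (0 : ℝ) < q := by exact_mod_cast hq
  set S := (Finset.Icc 1 M).filter
      (fun m : ℕ => |(m : ℝ) * α - round ((m : ℝ) * α)| ≤ δ) with hSdef
  have hS1 : ∀ m ∈ S, 1 ≤ m ∧ m ≤ M ∧ |(m : ℝ) * α - round ((m : ℝ) * α)| ≤ δ := by
    intro m hm
    simpa [hSdef, and_assoc] using hm
  set L := q / 2 + 1 with hL
  have hLpos : 0 < L := by omega
  have hblock : ∀ j, ((S.filter (fun m => m / L = j)).card : ℝ) ≤ 4 * q * δ + 2 := by
    intro j
    apply card_block_le hq h hδ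
    · intro m hm m' hm'
      have e1 := (Finset.mem_filter.mp hm).2
      have e2 := (Finset.mem_filter.mp hm').2
      have e3 := Nat.div_add_mod m L
      have e4 := Nat.div_add_mod m' L
      rw [e1] at e3
      rw [e2] at e4
      have e5 := Nat.mod_lt m hLpos
      omega
    · intro m hm
      exact (hS1 m (Finset.mem_filter.mp hm).1).2.2
  have hblock0 : ((S.filter (fun m => m / L = 0)).card : ℝ) ≤ 8 * q * δ := by
    rcases (S.filter (fun m => m / L = 0)).eq_empty_or_nonempty with he | ⟨m, hm⟩
    · rw [he]
      simp only [Finset.card_empty, Nat.cast_zero]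
      positivity
    · -- A single solution `0 < m ≤ q / 2` already forces `2 q δ ≥ 1`.
      have e1 := (Finset.mem_filter.mp hm).2
      have e2 := hS1 m (Finset.mem_filter.mp hm).1
      have e3 : m < L := by
        rcases Nat.div_eq_zero_iff.mp e1 with h0 | h0
        · omega
        · exact h0
      have e4 := sep_of_hasRatApprox h m (by omega) (by omega) (round ((m : ℝ) * α))
      have e5 := e4.trans e2.2.2
      rw [div_le_iff₀ (by positivity)] at e5
      have := hblock 0
      linarith
  have hmaps : ∀ m ∈ S, m / L ∈ Finset.range (M / L + 1) := by
    intro m hm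
    rw [Finset.mem_range]
    have := Nat.div_le_div_right (c := L) (hS1 m hm).2.1
    omega
  have hcard := Finset.card_eq_sum_card_fiberwise hmaps
  rw [Finset.sum_range_succ'] at hcard
  have hcardR : (S.card : ℝ) = ∑ j ∈ Finset.range (M / L),
      ((S.filter (fun m => m / L = j + 1)).card : ℝ) +
      ((S.filter (fun m => m / L = 0)).card : ℝ) := by exact_mod_cast hcard
  have hsum : ∑ j ∈ Finset.range (M / L), ((S.filter (fun m => m / L = j + 1)).card : ℝ)
      ≤ ((M / L : ℕ) : ℝ) * (4 * q * δ + 2) := by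
    calc _ ≤ ∑ j ∈ Finset.range (M / L), (4 * q * δ + 2) :=
          Finset.sum_le_sum fun j _ => hblock (j + 1)
      _ = _ := by
        rw [Finset.sum_const, Finset.card_range, nsmul_eq_mul]
  have hML : ((M / L : ℕ) : ℝ) ≤ 2 * M / q := by
    rw [le_div_iff₀ hqR]
    have e1 : M / L * L ≤ M := Nat.div_mul_le_self M L
    have e2 : q ≤ 2 * L := by omega
    have e3 : M / L * q ≤ 2 * M := by nlinarith [Nat.zero_le (M / L)]
    exact_mod_cast e3
  have h4 : ((M / L : ℕ) : ℝ) * (4 * q * δ + 2) ≤ 2 * M / q * (4 * q * δ + 2) := by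
    gcongr
  have h5 : 2 * M / q * (4 * q * δ + 2) = 8 * M * δ + 4 * M / q := by field_simp; ring
  linarith

/-- If `ξ` has no rational approximation with denominator strictly between `A` and `X / A`, then
some `r ≤ A` brings `r ξ` within `A / X` of an integer. -/
lemma exists_small_den {X A : ℕ} (hA : 0 < A) (hXA : A < X) (ξ : ℝ)
    (hbad : ¬ ∃ q' : ℕ, (A : ℝ) < q' ∧ (q' : ℝ) < (X : ℝ) / A ∧ HasRatApprox ξ q') :
    ∃ r : ℕ, 1 ≤ r ∧ r ≤ A ∧ |(r : ℝ) * ξ - round ((r : ℝ) * ξ)| ≤ (A : ℝ) / X := by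
  have hAR : (0 : ℝ) < A := by exact_mod_cast hA
  have hXR : (0 : ℝ) < X := by exact_mod_cast (hA.trans hXA)
  -- The largest integer strictly below `X / A`.
  set Q := (X - 1) / A with hQ
  have hQpos : 0 < Q := Nat.div_pos (by omega) hA
  have hQ1 : Q * A < X := by
    have := Nat.div_mul_le_self (X - 1) A
    rw [← hQ] at this
    omega
  have hQ2 : X ≤ (Q + 1) * A := by
    have := Nat.lt_div_mul_add hA (a := X - 1)
    rw [← hQ] at this
    rw [add_mul]
    omega
  obtain ⟨t, ht, htQ⟩ := Real.exists_rat_abs_sub_le_and_den_le ξ hQpos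
  have hdpos : (0 : ℝ) < t.den := by exact_mod_cast t.pos
  have hdQ : (t.den : ℝ) ≤ Q := by exact_mod_cast htQ
  have htcast : (t : ℝ) = (t.num : ℝ) / t.den := Rat.cast_def t
  rw [htcast] at ht
  refine ⟨t.den, t.pos, ?_, ?_⟩
  · by_contra! hlt
    refine hbad ⟨t.den, by exact_mod_cast hlt, ?_, t.num, ?_, ?_⟩
    · rw [lt_div_iff₀ hAR]
      have : t.den * A < X := lt_of_le_of_lt (Nat.mul_le_mul_right A htQ) hQ1
      exact_mod_cast this
    · simpa [Int.gcd] using t.reduced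
    · refine lt_of_le_of_lt ht ?_
      apply one_div_lt_one_div_of_lt (by positivity)
      nlinarith
  · refine (round_le _ t.num).trans ?_
    have e1 : (t.den : ℝ) * ξ - t.num = t.den * (ξ - t.num / t.den) := by field_simp
    rw [e1, abs_mul, abs_of_pos hdpos]
    calc (t.den : ℝ) * |ξ - t.num / t.den| ≤ t.den * (1 / ((Q + 1) * t.den)) := by gcongr
      _ = 1 / ((Q : ℝ) + 1) := by field_simp
      _ ≤ (A : ℝ) / X := by
        rw [div_le_div_iff₀ (by positivity) hXR]
        have : (X : ℝ) ≤ (Q + 1) * A := by exact_mod_cast hQ2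
        linarith

/-- Let `X, Y, A` be positive integers and `α` a real number with a rational approximation of
denominator `q`, where `X·Y/B > q > B` for some `B > 0`.  Then for all but
`O(Y·(A^{3/2}B^{−1/2} + A²B^{−1} + log(AY)·A³/X))` of the integers `1 ≤ n ≤ Y`, the number
`n·α` has a rational approximation with denominator `q′` for some `X/A > q′ > A`.
The implied constant is absolute. -/
theorem rat_approx_of_multiples :
    ∃ c : ℝ, 0 < c ∧ ∀ X Y A : ℕ, 0 < X → 0 < Y → 0 < A →
      ∀ (α : ℝ) (q : ℕ) (B : ℝ), 0 < B → HasRatApprox α q →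
        (B : ℝ) < q → (q : ℝ) < (X : ℝ) * Y / B →
        (Nat.card {n : ℕ | 1 ≤ n ∧ n ≤ Y ∧
            ¬ ∃ q' : ℕ, (A : ℝ) < q' ∧ (q' : ℝ) < (X : ℝ) / A ∧ HasRatApprox ((n : ℝ) * α) q'} : ℝ)
          ≤ c * Y * ((A : ℝ) ^ ((3 : ℝ) / 2) * B ^ (-(1 : ℝ) / 2) + (A : ℝ) ^ 2 / B +
              Real.log ((A : ℝ) * Y) * (A : ℝ) ^ 3 / X) := by
  classical
  refine ⟨16, by norm_num, ?_⟩
  intro X Y A hX hY hA α q B hB hα hBq hqB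
  have hXR : (0 : ℝ) < X := by exact_mod_cast hX
  have hYR : (0 : ℝ) < Y := by exact_mod_cast hY
  have hAR : (0 : ℝ) < A := by exact_mod_cast hA
  have hA1 : (1 : ℝ) ≤ A := by exact_mod_cast hA
  have hqR : (0 : ℝ) < q := hB.trans hBq
  have hq : 0 < q := by exact_mod_cast hqR
  set bad : ℕ → Prop := fun n =>
    ¬ ∃ q' : ℕ, (A : ℝ) < q' ∧ (q' : ℝ) < (X : ℝ) / A ∧ HasRatApprox ((n : ℝ) * α) q' with hbad
  set T := (Finset.Icc 1 Y).filter bad with hT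
  have hcard : Nat.card {n : ℕ | 1 ≤ n ∧ n ≤ Y ∧ bad n} = T.card := by
    have : {n : ℕ | 1 ≤ n ∧ n ≤ Y ∧ bad n} = (T : Set ℕ) := by
      ext n
      simp [hT, and_assoc]
    rw [this]
    simp
  change (Nat.card {n : ℕ | 1 ≤ n ∧ n ≤ Y ∧ bad n} : ℝ) ≤ _
  rw [hcard]
  have hTY : (T.card : ℝ) ≤ Y := by
    have : T.card ≤ (Finset.Icc 1 Y).card := Finset.card_filter_le _ _
    rw [Nat.card_Icc] at this
    have h2 : T.card ≤ Y := by omega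
    exact_mod_cast h2
  have htriv : ∀ s : ℝ, 1 / 16 ≤ s → (T.card : ℝ) ≤ 16 * Y * s := by
    intro s hs
    nlinarith
  set P := (A : ℝ) ^ ((3 : ℝ) / 2) * B ^ (-(1 : ℝ) / 2) with hP
  have hP0 : 0 ≤ P := by positivity
  have hlog0 : 0 ≤ Real.log ((A : ℝ) * Y) := by
    apply Real.log_nonneg
    exact_mod_cast Nat.mul_pos hA hY
  have hAB0 : 0 ≤ (A : ℝ) ^ 2 / B := by positivity
  have hL0 : 0 ≤ Real.log ((A : ℝ) * Y) * (A : ℝ) ^ 3 / X := by positivity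
  by_cases hAY : A * Y = 1
  · -- Here the logarithm vanishes; for `B ≥ 1` the denominator `q` itself is admissible.
    obtain ⟨rfl, rfl⟩ := mul_eq_one.mp hAY
    rcases le_or_gt B 1 with hB1 | hB1
    · have : (1 : ℝ) ≤ ((1 : ℕ) : ℝ) ^ 2 / B := by
        rw [le_div_iff₀ hB]
        simpa using hB1
      apply htriv
      linarith
    · have hTe : T = ∅ := by
        rw [hT, Finset.filter_eq_empty_iff]
        intro n hn
        have hn1 : n = 1 := by simpa using hn
        subst hn1
        simp only [hbad, not_not]
        refine ⟨q, ?_, ?_, by simpa using hα⟩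
        · push_cast
          linarith
        · refine hqB.trans_le ?_
          push_cast
          rw [mul_one, div_one]
          exact div_le_self hXR.le hB1.le
      rw [hTe]
      simp only [Finset.card_empty, Nat.cast_zero]
      positivity
  have hAY2 : 2 ≤ A * Y := by
    have := Nat.mul_pos hA hY
    omega
  have hlog : (1 : ℝ) / 2 ≤ Real.log ((A : ℝ) * Y) := by
    have h1 : Real.log 2 ≤ Real.log ((A : ℝ) * Y) := by
      apply Real.log_le_log (by norm_num)
      exact_mod_cast hAY2
    have := Real.log_two_gt_d9
    linarith
  have hL : 1 / 2 * ((A : ℝ) ^ 3 / X) ≤ Real.log ((A : ℝ) * Y) * (A : ℝ) ^ 3 / X := by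
    rw [mul_div_assoc]
    gcongr
  rcases le_or_gt X A with hXA | hXA
  · have h1 : (1 : ℝ) ≤ (A : ℝ) ^ 3 / X := by
      rw [le_div_iff₀ hXR]
      have : (X : ℝ) ≤ A := by exact_mod_cast hXA
      have := le_self_pow₀ hA1 (n := 3) (by norm_num)
      linarith
    apply htriv
    linarith
  set S := (Finset.Icc 1 (A * Y)).filter
      (fun m : ℕ => |(m : ℝ) * α - round ((m : ℝ) * α)| ≤ (A : ℝ) / X) with hS
  have hScard : (S.card : ℝ) ≤ _ :=
    card_near_le hq hα (by positivity : (0 : ℝ) ≤ (A : ℝ) / X) (A * Y)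
  have hsub : T ⊆ (Finset.Icc 1 A).biUnion (fun r => T.filter (fun n => r * n ∈ S)) := by
    intro n hn
    obtain ⟨hn1, hnb⟩ := Finset.mem_filter.mp hn
    rw [Finset.mem_Icc] at hn1
    obtain ⟨r, hr1, hrA, hr⟩ := exists_small_den hA hXA ((n : ℝ) * α) hnb
    refine Finset.mem_biUnion.mpr ⟨r, Finset.mem_Icc.mpr ⟨hr1, hrA⟩,
      Finset.mem_filter.mpr ⟨hn, Finset.mem_filter.mpr ⟨Finset.mem_Icc.mpr ⟨?_, ?_⟩, ?_⟩⟩⟩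
    · exact Nat.mul_pos hr1 hn1.1
    · exact Nat.mul_le_mul hrA hn1.2
    · push_cast
      rwa [mul_assoc]
  have hTS : T.card ≤ A * S.card := by
    refine (Finset.card_le_card hsub).trans ?_
    have := Finset.card_biUnion_le_card_mul (Finset.Icc 1 A)
      (fun r => T.filter (fun n => r * n ∈ S)) S.card ?_
    · simpa using this
    · intro r hr
      have hr1 := (Finset.mem_Icc.mp hr).1
      apply Finset.card_le_card_of_injOn (fun n => r * n)
      · intro n hn
        exact (Finset.mem_filter.mp hn).2
      · intro n _ n' _ hnn
        exact Nat.eq_of_mul_eq_mul_left hr1 hnn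
  have hTSR : (T.card : ℝ) ≤ A * S.card := by exact_mod_cast hTS
  -- Both `q / X < Y / B` and `1 / q < 1 / B` turn the terms involving `q` into `A² Y / B`.
  have h1 : (q : ℝ) * (A / X) ≤ A * Y / B := by
    calc (q : ℝ) * (A / X) ≤ (X : ℝ) * Y / B * (A / X) := by gcongr
      _ = A * Y / B := by field_simp
  have h2 : 4 * ((A * Y : ℕ) : ℝ) / q ≤ 4 * (A * Y / B) := by
    push_cast
    rw [mul_div_assoc]
    gcongr
  have h3 : (S.card : ℝ) ≤ 12 * (A * Y / B) + 8 * (A * Y) * (A / X) := by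
    push_cast at hScard h2
    linarith
  have h4 : (A : ℝ) * S.card ≤ A * (12 * (A * Y / B) + 8 * (A * Y) * (A / X)) := by gcongr
  have h5 : (A : ℝ) * (12 * (A * Y / B) + 8 * (A * Y) * (A / X))
      = Y * (12 * ((A : ℝ) ^ 2 / B) + 8 * ((A : ℝ) ^ 3 / X)) := by ring
  calc (T.card : ℝ) ≤ Y * (12 * ((A : ℝ) ^ 2 / B) + 8 * ((A : ℝ) ^ 3 / X)) := by linarith
    _ ≤ Y * (16 * (P + (A : ℝ) ^ 2 / B + Real.log ((A : ℝ) * Y) * (A : ℝ) ^ 3 / X)) := by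
        gcongr
        linarith
    _ = _ := by ring
end

section
/- Fix a number field L of degree d over ℚ with ring of integers O_L. There is a constant depending only on L such that for every positive number X and every real number α having a rational approximation of denominator q: |Σ_{N(𝔞) ≤ X} e(α·N(𝔞))| = O( X·( 1/q + X^{−1/d} + q/X )^{10^{−d}/2} ), the sum running over nonzero ideals 𝔞 of O_L with N(𝔞) ≤ X. -/
open scoped BigOperators Classical
open NumberField

/-!
The ideals are sorted by class. For a class `C` and an integral ideal `J` in `C⁻¹`, the ideals `𝔞`
in `C` correspond, up to the finite group of roots of unity, to the points `x` of the lattice `J` in a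
fundamental cone for the action of the units, with `N(𝔞) = |N(x)| / N(J)` (`class_sum_eq`). So it
suffices to bound, for each of the finitely many classes, the sum of `e(α |N(x)| / N(J))` over the
lattice points of norm at most `X * N(J)` in the cone.

This region is homogeneous and its part of norm at most `1` is bounded, so it lies in a box of side
`N ≍ X ^ (1 / d)` in coordinates with respect to a `ℤ`-basis of `J`. The box is sliced into
`N ^ (d - 1)` lattice lines in the direction of a basis vector `b` (`box_bound`). On such a line
the norm form is a polynomial of degree `d` with leading coefficient `N(b)`, a nonzero multiple
of `N(J)`, so the phase has leading coefficient `±κα` with a fixed nonzero integer `κ`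
(`norm_line`). The line meets the region in a number of intervals bounded in terms of `L`: the
conditions defining the region are inequalities between linear combinations of logarithms of the
absolute values of `x`, whose squares are quadratic polynomials along the line, so Rolle's theorem
bounds the number of times each condition changes (`breakpoints`, `cone_line`). There is thus no
boundary error term.

What remains is Weyl's inequality for a polynomial of degree `d` on an interval of length at most
`N`, with a saving that is a power of `1 / q + q / N ^ d` and no logarithms or divisor functions. It is
proved in inverse form by Weyl differencing (`weyl_inverse`): a sum of size `δN` makes
some multiple `k` of the leading coefficient, with `k ≤ C / δ ^ (10 ^ d)`, lie within
`C / (δ ^ (10 ^ d) N ^ d)` of an integer. The divisor bound of the classical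
argument is replaced by pigeonholing the multipliers and by the elementary `recurrence` lemma. For a
leading coefficient `κα` this contradicts the rational approximation of `α` unless
`δ ^ (10 ^ d)` is `O(1 / q + q / N ^ d)` (`weyl_bound`), which is stronger than needed.
-/

/-- `e(x) = exp(2πix)`. -/
noncomputable def eF (x : ℝ) : ℂ := Complex.exp (2 * Real.pi * Complex.I * x)

/-! ### The character and the distance to the nearest integer -/

/-- The distance from `x` to the nearest integer. -/
noncomputable def nd (x : ℝ) : ℝ := |x - round x|

theorem nd_le (x : ℝ) (z : ℤ) : nd x ≤ |x - z| := round_le x z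

theorem nd_nonneg (x : ℝ) : 0 ≤ nd x := abs_nonneg _

theorem nd_le_half (x : ℝ) : nd x ≤ 1 / 2 := abs_sub_round x

theorem nd_neg (x : ℝ) : nd (-x) = nd x := by
  apply le_antisymm
  · refine (nd_le (-x) (-round x)).trans_eq ?_
    unfold nd
    rw [← abs_neg]; push_cast; ring_nf
  · refine (nd_le x (-round (-x))).trans_eq ?_
    unfold nd
    rw [← abs_neg]; push_cast; ring_nf

theorem nd_le_add (x y : ℝ) : nd x ≤ nd y + |x - y| := by
  refine (nd_le x (round y)).trans ?_
  unfold nd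
  have := abs_add_le (y - round y) (x - y)
  rwa [show y - round y + (x - y) = x - round y by ring] at this

/-- A fraction with denominator `q` that is not an integer is at distance at least `1 / q` from
the integers. -/
theorem nd_rat_ge (a : ℤ) (q : ℕ) (hq : 0 < q) (h : ¬ (q : ℤ) ∣ a) : 1 / (q : ℝ) ≤ nd ((a : ℝ) / q) := by
  unfold nd
  set m := round ((a : ℝ) / q)
  have hq' : (0 : ℝ) < q := by exact_mod_cast hq
  have h1 : (1 : ℝ) ≤ |((a - m * q : ℤ) : ℝ)| := by
    have : a - m * q ≠ 0 := by
      intro h0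
      exact h ⟨m, by linarith⟩
    exact_mod_cast Int.one_le_abs this
  have : (a : ℝ) / q - m = ((a - m * q : ℤ) : ℝ) / q := by
    push_cast; field_simp
  rw [this, abs_div, abs_of_pos hq']
  gcongr

theorem eF_add (x y : ℝ) : eF (x + y) = eF x * eF y := by
  unfold eF; rw [← Complex.exp_add]; push_cast; ring_nf

theorem norm_eF (x : ℝ) : ‖eF x‖ = 1 := by
  unfold eF
  rw [show (2 * Real.pi * Complex.I * x : ℂ) = ((2 * Real.pi * x : ℝ) : ℂ) * Complex.I by
    push_cast; ring]
  exact Complex.norm_exp_ofReal_mul_I _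

theorem conj_eF (x : ℝ) : (starRingEnd ℂ) (eF x) = eF (-x) := by
  unfold eF; rw [← Complex.exp_conj]; congr 1; simp [map_ofNat (starRingEnd ℂ) 2]

theorem eF_int (n : ℤ) : eF n = 1 := by
  unfold eF
  rw [show (2 * Real.pi * Complex.I * ((n : ℝ) : ℂ) : ℂ) = n * (2 * Real.pi * Complex.I) by
    push_cast; ring]
  exact Complex.exp_int_mul_two_pi_mul_I n

theorem nd_le_norm_eF_sub_one (x : ℝ) : 4 * nd x ≤ ‖eF x - 1‖ := by
  have hx : eF x = eF (x - round x) := by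
    have := eF_add (x - round x) (round x)
    rw [eF_int, mul_one] at this
    rw [← this]; ring_nf
  rw [hx]
  unfold nd
  have hh := abs_sub_round x
  set y := x - round x with hy
  have h1 : ‖eF y - 1‖ = ‖2 * Real.sin (Real.pi * y)‖ := by
    unfold eF
    have := Complex.norm_exp_I_mul_ofReal_sub_one (2 * Real.pi * y)
    rw [show (2 * Real.pi * Complex.I * y : ℂ) = Complex.I * ((2 * Real.pi * y : ℝ) : ℂ) by
      push_cast; ring, this]
    congr 3; ring
  rw [h1, norm_mul, Real.norm_eq_abs, Real.norm_eq_abs, abs_two]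
  have h2 : 2 * |y| ≤ |Real.sin (Real.pi * y)| := by
    have := Real.mul_abs_le_abs_sin (x := Real.pi * y) (by
      rw [abs_mul, abs_of_pos Real.pi_pos]; nlinarith [Real.pi_pos])
    rw [abs_mul, abs_of_pos Real.pi_pos] at this
    calc 2 * |y| = 2 / Real.pi * (Real.pi * |y|) := by field_simp
      _ ≤ _ := this
  linarith

/-- A sum of the character over consecutive integers is a geometric sum, so it is at most
`1 / (2 * nd θ)`; the factor `nd θ` is kept on the left to include `θ ∈ ℤ`. -/
theorem linear_sum_bound (θ c : ℝ) (a : ℤ) (m : ℕ) :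
    nd θ * ‖∑ t ∈ Finset.range m, eF (θ * ((a + t : ℤ) : ℝ) + c)‖ ≤ 1 / 2 := by
  have h1 : ∑ t ∈ Finset.range m, eF (θ * ((a + t : ℤ) : ℝ) + c)
      = eF (θ * a + c) * ∑ t ∈ Finset.range m, eF θ ^ t := by
    rw [Finset.mul_sum]
    refine Finset.sum_congr rfl fun t _ ↦ ?_
    have : eF θ ^ t = eF (θ * t) := by
      unfold eF; rw [← Complex.exp_nat_mul]; congr 1; push_cast; ring
    rw [this, ← eF_add]; congr 1; push_cast; ring
  rw [h1, norm_mul, norm_eF, one_mul]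
  have h2 := geom_sum_mul (eF θ) m
  have h3 : ‖∑ t ∈ Finset.range m, eF θ ^ t‖ * ‖eF θ - 1‖ ≤ 2 := by
    rw [← norm_mul, h2]
    refine (norm_sub_le _ _).trans ?_
    rw [norm_pow, norm_eF]; norm_num
  nlinarith [nd_le_norm_eF_sub_one θ, norm_nonneg (∑ t ∈ Finset.range m, eF θ ^ t)]

/-! ### A recurrence lemma -/

/-- If `hθ` is within `ε` of an integer for at least `ηN` of the `h ≤ N`, and `ε` is much smaller
than `η`, then some bounded multiple `kθ` is much closer still, within `ε / (ηN)`.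

Take `r = a / q` with `q ≤ 2N` approximating `θ` by Dirichlet's theorem. When `4εq < 1`, all `h` in
the set are multiples of `q`, and `k = q` works, since the largest `h` is at least `ηNq`.
When `4εq ≥ 1`, the points `hθ` for `h` in a block of length `q` are `1 / (2q)`-separated modulo `1`,
so a block contains at most `O(εq)` admissible `h`, which is too few. -/
theorem recurrence (θ ε η : ℝ) (N : ℕ) (hN : 0 < N) (hη : 0 < η) (hε : 24 * ε < η)
    (H : Finset ℕ) (hH : ∀ h ∈ H, 1 ≤ h ∧ h ≤ N ∧ nd (h * θ) ≤ ε) (hc : η * N ≤ H.card) :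
    ∃ k : ℕ, 1 ≤ k ∧ (k : ℝ) ≤ 1 / η ∧ nd (k * θ) ≤ ε / (η * N) := by
  have hN' : (0 : ℝ) < N := by exact_mod_cast hN
  have hcpos : (0 : ℝ) < H.card := lt_of_lt_of_le (by positivity) hc
  have hne : H.Nonempty := by
    rw [← Finset.card_pos]; exact_mod_cast hcpos
  have hε0 : 0 ≤ ε := by
    obtain ⟨h, hh⟩ := hne
    exact (nd_nonneg _).trans (hH h hh).2.2
  obtain ⟨r, hr1, hr2⟩ := Real.exists_rat_abs_sub_le_and_den_le θ (n := 2 * N) (by omega)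
  set q := r.den with hqdef
  have hq : 0 < q := r.den_pos
  have hq' : (0 : ℝ) < q := by exact_mod_cast hq
  set β := θ - r with hβ
  have hrq : (r : ℝ) = (r.num : ℝ) / q := Rat.cast_def r
  have hNβ : N * |β| ≤ 1 / (2 * q) := by
    calc N * |β| ≤ N * (1 / (((2 * N : ℕ) + 1) * q)) := by gcongr
      _ ≤ 1 / (2 * q) := by
        rw [mul_one_div, div_le_div_iff₀ (by positivity) (by positivity)]
        push_cast; nlinarith
  -- multiples of `θ` by `h` not divisible by `q` stay away from the integers
  have key : ∀ h : ℤ, |(h : ℝ)| ≤ N → ¬ (q : ℤ) ∣ h → 1 / (2 * q) ≤ nd (h * θ) := by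
    intro h hh hd
    have hd' : ¬ (q : ℤ) ∣ h * r.num := by
      intro hdd
      exact hd ((Int.isCoprime_iff_gcd_eq_one.mpr (by
        have := r.reduced
        rw [Nat.Coprime, Nat.gcd_comm] at this
        simpa [Int.gcd] using this)).dvd_of_dvd_mul_right hdd)
    have h1 := nd_rat_ge _ q hq hd'
    have h2 := nd_le_add (((h * r.num : ℤ) : ℝ) / q) (h * θ)
    have h3 : |((h * r.num : ℤ) : ℝ) / q - h * θ| ≤ 1 / (2 * q) := by
      have : ((h * r.num : ℤ) : ℝ) / q - h * θ = - (h * β) := by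
        rw [hβ, hrq]; push_cast; ring
      rw [this, abs_neg, abs_mul]
      exact (mul_le_mul_of_nonneg_right hh (abs_nonneg _)).trans hNβ
    have h4 : 1 / (q : ℝ) = 1 / (2 * q) + 1 / (2 * q) := by field_simp; norm_num
    linarith
  rcases lt_or_ge (4 * ε * q) 1 with hc1 | hc1
  · have hdvd : ∀ h ∈ H, q ∣ h := by
      intro h hh
      by_contra hnd
      obtain ⟨h1, h2, h3⟩ := hH h hh
      have h4 := key h (by
        rw [Int.cast_natCast, Nat.abs_cast]
        exact_mod_cast h2) (by exact_mod_cast hnd)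
      rw [Int.cast_natCast] at h4
      have : 1 / (2 * (q : ℝ)) ≤ ε := h4.trans h3
      rw [div_le_iff₀ (by positivity)] at this
      nlinarith
    set M := H.max' hne with hM
    have hMH : M ∈ H := H.max'_mem hne
    have hcard : H.card * q ≤ M := by
      have hsub : H ⊆ (Finset.Icc 1 (M / q)).image (fun j ↦ q * j) := by
        intro h hh
        obtain ⟨j, rfl⟩ := hdvd h hh
        refine Finset.mem_image.mpr ⟨j, ?_, rfl⟩
        rw [Finset.mem_Icc]
        refine ⟨?_, ?_⟩
        · have := (hH _ hh).1
          rcases Nat.eq_zero_or_pos j with rfl | hj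
          · simp at this
          · exact hj
        · rw [Nat.le_div_iff_mul_le hq, mul_comm]
          exact H.le_max' _ hh
      have := (Finset.card_le_card hsub).trans Finset.card_image_le
      rw [Nat.card_Icc, Nat.add_sub_cancel] at this
      exact (Nat.mul_le_mul_right q this).trans (Nat.div_mul_le_self M q)
    obtain ⟨hM1, hM2, hM3⟩ := hH M hMH
    obtain ⟨j, hj⟩ := hdvd M hMH
    have hMN : (M : ℝ) ≤ N := by exact_mod_cast hM2
    have hcard' : (H.card : ℝ) * q ≤ M := by exact_mod_cast hcard
    have hMβ : M * |β| ≤ ε := by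
      have e1 : (M : ℝ) * θ = ((j * r.num : ℤ) : ℝ) + M * β := by
        rw [hβ, hrq, hj]; push_cast; field_simp; ring
      have e2 : |(M : ℝ) * β| ≤ 1 / (2 * q) := by
        rw [abs_mul, Nat.abs_cast]
        exact (mul_le_mul_of_nonneg_right hMN (abs_nonneg _)).trans hNβ
      have e3 : (1 : ℝ) / (2 * q) ≤ 1 / 2 := by
        have : (1 : ℝ) ≤ q := by exact_mod_cast hq
        gcongr; linarith
      -- any other integer is at distance at least `1 / 2`
      have e4 : |(M : ℝ) * β| ≤ nd (M * θ) := by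
        unfold nd
        rw [e1]
        set z := round (((j * r.num : ℤ) : ℝ) + M * β)
        by_cases hz : z = j * r.num
        · rw [hz]; simp
        · have h5 : (1 : ℝ) ≤ |((j * r.num - z : ℤ) : ℝ)| := by
            exact_mod_cast Int.one_le_abs (sub_ne_zero.mpr (Ne.symm hz))
          have h6 := abs_sub_abs_le_abs_sub ((j * r.num - z : ℤ) : ℝ) (-(M * β))
          rw [abs_neg] at h6
          have h7 : ((j * r.num - z : ℤ) : ℝ) - (-(M * β)) = ((j * r.num : ℤ) : ℝ) + M * β - z := by
            push_cast; ring
          rw [h7] at h6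
          linarith
      rw [abs_mul, Nat.abs_cast] at e4
      exact e4.trans hM3
    refine ⟨q, hq, ?_, ?_⟩
    · rw [le_div_iff₀ hη]
      have : η * N * q ≤ N := (mul_le_mul_of_nonneg_right hc hq'.le).trans (hcard'.trans hMN)
      have h8 : (q * η) * N ≤ 1 * N := by linarith
      exact le_of_mul_le_mul_right h8 hN'
    · have h9 : nd (q * θ) ≤ q * |β| := by
        refine (nd_le _ r.num).trans_eq ?_
        rw [← Nat.abs_cast q, ← abs_mul, hβ, hrq, Nat.abs_cast]; congr 1; field_simp
      refine h9.trans ?_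
      rw [le_div_iff₀ (by positivity)]
      calc q * |β| * (η * N) = (η * N * q) * |β| := by ring
        _ ≤ M * |β| := by
          gcongr
          exact (mul_le_mul_of_nonneg_right hc hq'.le).trans hcard'
        _ ≤ ε := hMβ
  · exfalso
    -- sorting the `h` by block of length `q` and by cell of length `1 / (2q)` containing the signed
    -- distance of `hθ` to its nearest integer separates them
    let g : ℕ → ℝ := fun h ↦ h * θ - round (h * θ)
    let φ : ℕ → ℕ × ℕ := fun h ↦ (h / q, ⌊2 * q * (g h + ε)⌋₊)
    have hg : ∀ h ∈ H, |g h| ≤ ε := fun h hh ↦ (hH h hh).2.2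
    have hinj : Set.InjOn φ H := by
      intro h hh h' hh' heq
      simp only [φ, Prod.mk.injEq] at heq
      obtain ⟨e1, e2⟩ := heq
      by_contra hne'
      have b1 := abs_le.mp (hg h hh)
      have b2 := abs_le.mp (hg h' hh')
      have p1 : 0 ≤ 2 * q * (g h + ε) := by
        have : 0 ≤ g h + ε := by linarith
        positivity
      have p2 : 0 ≤ 2 * q * (g h' + ε) := by
        have : 0 ≤ g h' + ε := by linarith
        positivity
      have hlt : |g h - g h'| < 1 / (2 * q) := by
        have f1 := Nat.floor_le p1
        have f2 := Nat.lt_floor_add_one (2 * q * (g h + ε))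
        have f3 := Nat.floor_le p2
        have f4 := Nat.lt_floor_add_one (2 * q * (g h' + ε))
        rw [e2] at f1 f2
        have f5 : |2 * q * (g h + ε) - 2 * q * (g h' + ε)| < 1 := by
          rw [abs_lt]; constructor <;> linarith
        rw [show 2 * q * (g h + ε) - 2 * q * (g h' + ε) = (2 * q) * (g h - g h') by ring,
          abs_mul, abs_of_pos (by positivity)] at f5
        rw [lt_div_iff₀ (by positivity), mul_comm]
        exact f5
      have hnd : ¬ (q : ℤ) ∣ ((h : ℤ) - h') := by
        rintro ⟨c, hc⟩
        have m1 := Nat.div_add_mod h q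
        have m2 := Nat.div_add_mod h' q
        have m3 := Nat.mod_lt h hq
        have m4 := Nat.mod_lt h' hq
        rw [e1] at m1
        have : |(q : ℤ) * c| < q := by
          have m5 := Int.emod_nonneg (h : ℤ) (b := q) (by omega)
          have m6 := Int.emod_nonneg (h' : ℤ) (b := q) (by omega)
          rw [← hc, abs_lt]; constructor <;> zify at m1 m2 m3 m4 <;> linarith
        rw [abs_mul, Nat.abs_cast] at this
        have c0 : c = 0 := by
          by_contra hc0
          have := Int.one_le_abs hc0
          nlinarith
        rw [c0, mul_zero] at hc
        omega
      have hle : 1 / (2 * (q : ℝ)) ≤ nd (((h - h' : ℤ) : ℝ) * θ) := by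
        refine key _ ?_ hnd
        have n1 := hH h hh
        have n2 := hH h' hh'
        have n3 : (h : ℝ) ≤ N := by exact_mod_cast n1.2.1
        have n4 : (h' : ℝ) ≤ N := by exact_mod_cast n2.2.1
        push_cast
        rw [abs_le]; constructor <;> linarith [Nat.cast_nonneg (α := ℝ) h, Nat.cast_nonneg (α := ℝ) h']
      have := nd_le (((h - h' : ℤ) : ℝ) * θ) (round (h * θ) - round (h' * θ))
      have e5 : ((h - h' : ℤ) : ℝ) * θ - ((round (h * θ) - round (h' * θ) : ℤ) : ℝ) = g h - g h' := by
        simp only [g]; push_cast; ring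
      rw [e5] at this
      linarith
    have hmaps : ∀ h ∈ H, φ h ∈ Finset.range (N / q + 1) ×ˢ Finset.range (⌊4 * ε * q⌋₊ + 1) := by
      intro h hh
      have b1 := abs_le.mp (hg h hh)
      simp only [φ, Finset.mem_product, Finset.mem_range, Nat.lt_succ_iff]
      refine ⟨Nat.div_le_div_right (hH h hh).2.1, Nat.floor_le_floor ?_⟩
      nlinarith
    have hcard := Finset.card_le_card_of_injOn φ hmaps hinj
    rw [Finset.card_product, Finset.card_range, Finset.card_range] at hcard
    have hcard' : (H.card : ℝ) ≤ ((N / q : ℕ) + 1) * (⌊4 * ε * q⌋₊ + 1) := by exact_mod_cast hcard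
    have u1 : ((N / q : ℕ) : ℝ) + 1 ≤ 3 * N / q := by
      have : ((N / q : ℕ) : ℝ) ≤ N / q := Nat.cast_div_le
      have h2 : (1 : ℝ) ≤ 2 * N / q := by
        rw [le_div_iff₀ hq', one_mul]; exact_mod_cast hr2
      have : (3 * N / q : ℝ) = N / q + 2 * N / q := by ring
      linarith
    have u2 : (⌊4 * ε * q⌋₊ : ℝ) + 1 ≤ 8 * ε * q := by
      have := Nat.floor_le (a := 4 * ε * q) (by positivity)
      linarith
    have u3 : (H.card : ℝ) ≤ (3 * N / q) * (8 * ε * q) :=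
      hcard'.trans (mul_le_mul u1 u2 (by positivity) (by positivity))
    have u4 : (3 * N / q) * (8 * ε * q) = 24 * ε * N := by field_simp; ring
    nlinarith

/-! ### Weyl's inequality in inverse form -/

open Polynomial in
/-- Differencing a polynomial of degree at most `d + 1` lowers the degree and multiplies the leading
coefficient by `(d + 1)h`. -/
theorem diff_poly (f : ℝ[X]) (d : ℕ) (hf : f.natDegree ≤ d + 1) (h : ℝ) :
    (taylor h f - f).natDegree ≤ d ∧
      (taylor h f - f).coeff d = (d + 1) * h * f.coeff (d + 1) := by
  have hh : (hasseDeriv d f).natDegree < 2 := by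
    have := natDegree_hasseDeriv_le f d
    omega
  have h1 : (taylor h f).coeff d = f.coeff d + (d + 1) * h * f.coeff (d + 1) := by
    rw [taylor_coeff, eval_eq_sum_range' hh]
    simp [Finset.sum_range_succ, hasseDeriv_coeff, Nat.add_comm 1 d]
    ring
  have hh2 : (hasseDeriv (d + 1) f).natDegree < 1 := by
    have := natDegree_hasseDeriv_le f (d + 1)
    omega
  have h2 : (taylor h f).coeff (d + 1) = f.coeff (d + 1) := by
    rw [taylor_coeff, eval_eq_sum_range' hh2]
    simp [hasseDeriv_coeff]
  refine ⟨?_, by rw [coeff_sub, h1]; ring⟩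
  rw [natDegree_le_iff_coeff_eq_zero]
  intro n hn
  rw [coeff_sub]
  rcases Nat.eq_or_lt_of_le (Nat.succ_le_of_lt hn) with e | e
  · rw [← e, Nat.succ_eq_add_one, h2, sub_self]
  · rw [coeff_eq_zero_of_natDegree_lt (by rw [natDegree_taylor]; omega),
      coeff_eq_zero_of_natDegree_lt (by omega), sub_self]

/-- Weyl differencing: the square of an exponential sum is controlled by its correlations with
its nonnegative shifts. -/
theorem weyl_diff (z : ℕ → ℂ) (m : ℕ) :
    ‖∑ t ∈ Finset.range m, z t‖ ^ 2 ≤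
      2 * ∑ h ∈ Finset.range m, ‖∑ t ∈ Finset.range (m - h), z (t + h) * (starRingEnd ℂ) (z t)‖ := by
  have main : ‖∑ t ∈ Finset.range m, z t‖ ^ 2 + ∑ t ∈ Finset.range m, ‖z t‖ ^ 2 =
      2 * (∑ h ∈ Finset.range m, ∑ t ∈ Finset.range (m - h), z (t + h) * (starRingEnd ℂ) (z t)).re := by
    induction m with
    | zero => simp
    | succ m ih =>
      have e1 : ∑ h ∈ Finset.range (m + 1), ∑ t ∈ Finset.range (m + 1 - h),
            z (t + h) * (starRingEnd ℂ) (z t) =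
          (∑ h ∈ Finset.range m, ∑ t ∈ Finset.range (m - h), z (t + h) * (starRingEnd ℂ) (z t))
            + z m * (starRingEnd ℂ) (∑ t ∈ Finset.range (m + 1), z t) := by
        have : ∀ h ∈ Finset.range (m + 1), ∑ t ∈ Finset.range (m + 1 - h),
            z (t + h) * (starRingEnd ℂ) (z t) =
            ∑ t ∈ Finset.range (m - h), z (t + h) * (starRingEnd ℂ) (z t)
              + z m * (starRingEnd ℂ) (z (m - h)) := by
          intro h hh
          rw [Finset.mem_range] at hh
          rw [show m + 1 - h = (m - h) + 1 by omega, Finset.sum_range_succ,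
            show m - h + h = m by omega]
        rw [Finset.sum_congr rfl this, Finset.sum_add_distrib, Finset.sum_range_succ (n := m),
          ← Finset.mul_sum, map_sum, ← Finset.sum_range_reflect (fun t ↦ (starRingEnd ℂ) (z t)) (m + 1)]
        simp
      rw [e1, Complex.add_re, mul_add, ← ih, Finset.sum_range_succ, Finset.sum_range_succ, map_add,
        mul_add, Complex.add_re, Complex.mul_conj, Complex.ofReal_re, Complex.sq_norm, Complex.sq_norm,
        Complex.sq_norm, Complex.normSq_add]
      have : ((∑ x ∈ Finset.range m, z x) * (starRingEnd ℂ) (z m)).re =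
          (z m * (starRingEnd ℂ) (∑ x ∈ Finset.range m, z x)).re := by
        simp [Complex.mul_re]; ring
      rw [this]; ring
  have h1 : 0 ≤ ∑ t ∈ Finset.range m, ‖z t‖ ^ 2 := Finset.sum_nonneg fun _ _ ↦ by positivity
  have h2 := (Complex.re_le_norm (∑ h ∈ Finset.range m, ∑ t ∈ Finset.range (m - h),
    z (t + h) * (starRingEnd ℂ) (z t))).trans (norm_sum_le _ _)
  linarith

open Polynomial in
/-- Weyl's inequality in inverse form: if a polynomial phase of degree at most `d` has a sum of size
at least `δN` over an interval of length at most `N`, then a multiple `k` of its coefficient of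
degree `d`, with `k` polynomial in `1 / δ`, is within `O_δ(N ^ (-d))` of an integer. There are no
logarithmic factors and the exponent of `δ` is `10 ^ d`.

In the inductive step, about `δ²N` of the differenced sums are of size at least `δ²N / 8`. The
multiplier `κ j` that the inductive hypothesis attaches to the shift `j` takes at most `K` values, so
one value is shared by `ηN` shifts, and `recurrence` removes the shift. -/
theorem weyl_inverse (d : ℕ) (hd : 1 ≤ d) : ∃ C : ℝ, 1 ≤ C ∧ ∀ (N : ℕ), 0 < N → ∀ δ : ℝ, 0 < δ →
    δ ≤ 1 → ∀ f : ℝ[X], f.natDegree ≤ d → ∀ (a : ℤ) (m : ℕ), m ≤ N →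
    δ * N ≤ ‖∑ t ∈ Finset.range m, eF (f.eval ((a + t : ℤ) : ℝ))‖ →
    ∃ k : ℕ, 1 ≤ k ∧ (k : ℝ) ≤ C / δ ^ (10 ^ d) ∧
      nd (k * f.coeff d) ≤ C / δ ^ (10 ^ d) / N ^ d := by
  induction d, hd using Nat.le_induction with
  | base =>
    refine ⟨1, le_refl _, fun N hN δ hδ hδ1 f hf a m hm h ↦ ⟨1, le_refl _, ?_, ?_⟩⟩
    · rw [le_div_iff₀ (by positivity)]
      simpa using pow_le_one₀ hδ.le hδ1
    · have hN' : (0 : ℝ) < N := by exact_mod_cast hN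
      have e : ∀ x : ℝ, f.eval x = f.coeff 1 * x + f.coeff 0 := by
        intro x
        rw [eval_eq_sum_range' (n := 2) (by omega)]
        simp [Finset.sum_range_succ]; ring
      simp_rw [e] at h
      have h1 := linear_sum_bound (f.coeff 1) (f.coeff 0) a m
      have h2 : nd (f.coeff 1) * (δ * N) ≤ 1 / 2 :=
        (mul_le_mul_of_nonneg_left h (nd_nonneg _)).trans h1
      rw [Nat.cast_one, one_mul, pow_one, pow_one, div_div, le_div_iff₀ (by positivity)]
      have h3 : δ ^ 10 ≤ δ := by
        simpa using pow_le_pow_of_le_one hδ.le hδ1 (show 1 ≤ 10 by norm_num)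
      calc nd (f.coeff 1) * (δ ^ 10 * N) ≤ nd (f.coeff 1) * (δ * N) := by
            gcongr
            exact nd_nonneg _
        _ ≤ 1 := by linarith
  | succ d hd ih =>
    obtain ⟨C', hC', ih⟩ := ih
    set A := 10 ^ d with hA
    -- the case of small `ε` uses `4A + 2 ≤ 10A`, the case of large `ε` uses `8A + 4 ≤ 10A`
    have hA10 : 10 ≤ A := by
      rw [hA]; calc 10 = 10 ^ 1 := by norm_num
        _ ≤ 10 ^ d := Nat.pow_le_pow_right (by norm_num) hd
    have hAd : d + 1 ≤ A := by
      rw [hA]; exact Nat.succ_le_of_lt (Nat.lt_pow_self (by norm_num))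
    have hA' : 10 ^ (d + 1) = 10 * A := by rw [hA, pow_succ, mul_comm]
    set B : ℝ := C' * 8 ^ A with hB
    have hB1 : 1 ≤ B := by
      rw [hB]; exact one_le_mul_of_one_le_of_one_le hC' (one_le_pow₀ (by norm_num))
    -- the three terms dominate the constants arising in the three cases below
    set D : ℝ := 4 ^ (d + 1) + 8 * (d + 1) * B ^ 2 + (192 * B ^ 2) ^ 2 with hD
    have hB0 : 0 < B := by linarith
    have hD0 : 0 < D := by positivity
    refine ⟨D, ?_, fun N hN δ hδ hδ1 f hf a m hm h ↦ ?_⟩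
    · have : (1 : ℝ) ≤ 4 ^ (d + 1) := one_le_pow₀ (by norm_num)
      rw [hD]; nlinarith [show (0 : ℝ) ≤ 8 * (d + 1) * B ^ 2 by positivity, sq_nonneg (192 * B ^ 2)]
    rw [hA']
    have hN' : (0 : ℝ) < N := by exact_mod_cast hN
    have hN1 : (1 : ℝ) ≤ N := by exact_mod_cast hN
    have hm' : (m : ℝ) ≤ N := by exact_mod_cast hm
    -- `δ ^ (10 A)` is smaller than the smaller powers that occur
    have hpow : ∀ (c : ℝ) (j : ℕ), 0 ≤ c → c ≤ D → j ≤ 10 * A → c / δ ^ j ≤ D / δ ^ (10 * A) := by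
      intro c j hc0 hc hj
      exact div_le_div₀ hD0.le hc (by positivity) (pow_le_pow_of_le_one hδ.le hδ1 hj)
    have hD_ge1 : (4 : ℝ) ^ (d + 1) ≤ D := by
      rw [hD]; nlinarith [show (0 : ℝ) ≤ 8 * (d + 1) * B ^ 2 by positivity, sq_nonneg (192 * B ^ 2)]
    have hD_ge2 : 8 * (d + 1) * B ^ 2 ≤ D := by
      rw [hD]; nlinarith [show (0 : ℝ) ≤ 4 ^ (d + 1) by positivity, sq_nonneg (192 * B ^ 2)]
    have hD_ge3 : (192 * B ^ 2) ^ 2 ≤ D := by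
      rw [hD]; nlinarith [show (0 : ℝ) ≤ 4 ^ (d + 1) by positivity, show (0 : ℝ) ≤ 8 * (d + 1) * B ^ 2 by positivity]
    -- when `N` is bounded in terms of `δ`, take `k = 1`
    have trivial_case : (N : ℝ) ^ (d + 1) ≤ D / δ ^ (10 * A) → ∃ k : ℕ, 1 ≤ k ∧
        (k : ℝ) ≤ D / δ ^ (10 * A) ∧
        nd (k * f.coeff (d + 1)) ≤ D / δ ^ (10 * A) / N ^ (d + 1) := by
      intro hsm
      refine ⟨1, le_refl _, ?_, ?_⟩
      · rw [Nat.cast_one]; exact (one_le_pow₀ hN1).trans hsm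
      · refine (nd_le_half _).trans ?_
        have : 1 ≤ D / δ ^ (10 * A) / N ^ (d + 1) := by
          rw [le_div_iff₀ (by positivity), one_mul]; exact hsm
        linarith
    rcases lt_or_ge (N : ℝ) (4 / δ ^ 2) with hsm | hbig
    · apply trivial_case
      calc (N : ℝ) ^ (d + 1) ≤ (4 / δ ^ 2) ^ (d + 1) := by gcongr
        _ = 4 ^ (d + 1) / δ ^ (2 * (d + 1)) := by rw [div_pow, ← pow_mul]
        _ ≤ _ := hpow _ _ (by positivity) hD_ge1 (by omega)
    set S : ℕ → ℝ := fun j ↦ ‖∑ t ∈ Finset.range (m - j),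
      eF ((taylor (j : ℝ) f - f).eval ((a + t : ℤ) : ℝ))‖ with hS
    have hSle : ∀ j, S j ≤ N := by
      intro j
      refine (norm_sum_le _ _).trans ?_
      simp only [norm_eF, Finset.sum_const, Finset.card_range, nsmul_eq_mul, mul_one]
      have : ((m - j : ℕ) : ℝ) ≤ m := by exact_mod_cast Nat.sub_le m j
      linarith
    have hsq : (δ * N) ^ 2 ≤ 2 * ∑ j ∈ Finset.range m, S j := by
      refine (pow_le_pow_left₀ (by positivity) h 2).trans ((weyl_diff _ m).trans_eq ?_)
      congr 1
      refine Finset.sum_congr rfl fun j _ ↦ ?_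
      rw [hS]
      congr 1
      refine Finset.sum_congr rfl fun t _ ↦ ?_
      rw [conj_eF, ← eF_add, eval_sub, taylor_eval]
      congr 1; push_cast; ring_nf
    have hbig' : 4 * N ≤ δ ^ 2 * N ^ 2 := by
      rw [div_le_iff₀ (by positivity)] at hbig
      nlinarith
    set H := (Finset.Ico 1 m).filter (fun j ↦ δ ^ 2 / 8 * N ≤ S j) with hH
    have hHcard : δ ^ 2 * N / 8 ≤ H.card := by
      have e1 : ∑ j ∈ Finset.range m, S j ≤ N + ∑ j ∈ Finset.Ico 1 m, S j := by
        rcases Nat.eq_zero_or_pos m with rfl | hm0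
        · simp
        · rw [Finset.range_eq_Ico, Finset.sum_eq_sum_Ico_succ_bot hm0]
          gcongr
          exact hSle 0
      have e2 : ∑ j ∈ Finset.Ico 1 m, S j ≤ H.card * N + N * (δ ^ 2 / 8 * N) := by
        rw [← Finset.sum_filter_add_sum_filter_not (Finset.Ico 1 m) (fun j ↦ δ ^ 2 / 8 * N ≤ S j)]
        refine add_le_add ?_ ?_
        · rw [← nsmul_eq_mul]
          exact Finset.sum_le_card_nsmul _ _ _ fun j _ ↦ hSle j
        · refine (Finset.sum_le_card_nsmul _ _ (δ ^ 2 / 8 * N) fun j hj ↦ ?_).trans ?_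
          · exact (not_le.mp (Finset.mem_filter.mp hj).2).le
          · rw [nsmul_eq_mul]
            gcongr
            refine le_trans ?_ hm
            have := (Finset.card_filter_le (Finset.Ico 1 m) (fun j ↦ ¬ δ ^ 2 / 8 * N ≤ S j))
            rw [Nat.card_Ico] at this
            exact_mod_cast this.trans (Nat.sub_le _ _)
      have e3 : δ ^ 2 * N ^ 2 / 8 ≤ H.card * N := by nlinarith
      have e4 : (δ ^ 2 * N / 8) * N ≤ H.card * N := by linarith
      exact le_of_mul_le_mul_right e4 hN'
    set K : ℝ := B / δ ^ (2 * A) with hK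
    have hK0 : 0 < K := by positivity
    have hK1 : 1 ≤ K := by
      rw [hK, le_div_iff₀ (by positivity), one_mul]
      exact (pow_le_one₀ hδ.le hδ1).trans hB1
    have hKeq : C' / (δ ^ 2 / 8) ^ A = K := by
      rw [hK, hB, div_pow, ← pow_mul]; field_simp
    have hstep : ∀ j ∈ H, ∃ k : ℕ, 1 ≤ k ∧ (k : ℝ) ≤ K ∧
        nd (k * ((d + 1) * j * f.coeff (d + 1))) ≤ K / N ^ d := by
      intro j hj
      obtain ⟨hd1, hd2⟩ := diff_poly f d hf (j : ℝ)
      have := ih N hN (δ ^ 2 / 8) (by positivity) (by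
        have := pow_le_one₀ (n := 2) hδ.le hδ1; linarith) _ hd1 a (m - j) (by omega)
        (Finset.mem_filter.mp hj).2
      rwa [hd2, hKeq] at this
    choose! κ hκ1 hκ2 hκ3 using hstep
    have hmaps : ∀ j ∈ H, κ j ∈ Finset.Icc 1 ⌊K⌋₊ := fun j hj ↦
      Finset.mem_Icc.mpr ⟨hκ1 j hj, Nat.le_floor (hκ2 j hj)⟩
    set η : ℝ := δ ^ 2 / (8 * K) with hη
    have hη0 : 0 < η := by positivity
    obtain ⟨k0, hk0, hk0c⟩ := Finset.exists_le_card_fiber_of_nsmul_le_card_of_maps_to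
      (M := ℝ) (b := η * N) hmaps ⟨1, Finset.mem_Icc.mpr ⟨le_refl _, Nat.le_floor (by simpa using hK1)⟩⟩
      (by
        rw [Nat.card_Icc, Nat.add_sub_cancel, nsmul_eq_mul]
        refine le_trans ?_ hHcard
        calc (⌊K⌋₊ : ℝ) * (η * N) ≤ K * (η * N) := by
              gcongr; exact Nat.floor_le hK0.le
          _ = δ ^ 2 * N / 8 := by rw [hη]; field_simp)
    set ε : ℝ := K / N ^ d with hε
    rw [Finset.mem_Icc] at hk0
    have hk0K : (k0 : ℝ) ≤ K := (Nat.cast_le.mpr hk0.2).trans (Nat.floor_le hK0.le)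
    rcases lt_or_ge (24 * ε) η with hsmall | hlarge
    · obtain ⟨k1, hk1, hk1', hk1''⟩ := recurrence (k0 * (d + 1) * f.coeff (d + 1)) ε η N hN hη0 hsmall
        (H.filter fun j ↦ κ j = k0) (by
          intro j hj
          rw [Finset.mem_filter] at hj
          have h1 := hκ3 j hj.1
          rw [hj.2] at h1
          have h2 := Finset.mem_Ico.mp (Finset.mem_filter.mp hj.1).1
          refine ⟨h2.1, by omega, ?_⟩
          convert h1 using 2; ring) hk0c
      have hval : 8 * (d + 1) * K ^ 2 / δ ^ 2 ≤ D / δ ^ (10 * A) := by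
        calc 8 * (d + 1) * K ^ 2 / δ ^ 2 = (8 * (d + 1) * B ^ 2) / δ ^ (4 * A + 2) := by
              rw [hK, div_pow, ← pow_mul, pow_add, show 2 * A * 2 = 4 * A by ring]; field_simp
          _ ≤ _ := hpow _ _ (by positivity) hD_ge2 (by omega)
      refine ⟨k1 * k0 * (d + 1), ?_, ?_, ?_⟩
      · exact Nat.succ_le_of_lt (by have := hk0.1; positivity)
      · refine le_trans ?_ hval
        push_cast
        calc (k1 : ℝ) * k0 * (d + 1) ≤ (1 / η) * K * (d + 1) := by gcongr
          _ = 8 * (d + 1) * K ^ 2 / δ ^ 2 := by rw [hη]; field_simp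
      · have : ((k1 * k0 * (d + 1) : ℕ) : ℝ) * f.coeff (d + 1)
            = k1 * (k0 * (d + 1) * f.coeff (d + 1)) := by push_cast; ring
        rw [this]
        refine hk1''.trans ?_
        have hd1 : (1 : ℝ) ≤ d + 1 := by linarith [Nat.cast_nonneg (α := ℝ) d]
        calc ε / (η * N) = 8 * 1 * K ^ 2 / δ ^ 2 / N ^ (d + 1) := by
              rw [hε, hη]; field_simp; ring
          _ ≤ 8 * (d + 1) * K ^ 2 / δ ^ 2 / N ^ (d + 1) := by gcongr
          _ ≤ _ := by gcongr
    · apply trivial_case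
      have h1 : (N : ℝ) ^ d ≤ 192 * K ^ 2 / δ ^ 2 := by
        rw [hε, hη, div_le_iff₀ (by positivity)] at hlarge
        rw [le_div_iff₀ (by positivity)]
        have : δ ^ 2 * N ^ d ≤ 24 * (K / N ^ d) * (8 * K) * N ^ d := by gcongr
        calc (N : ℝ) ^ d * δ ^ 2 = δ ^ 2 * N ^ d := by ring
          _ ≤ _ := this
          _ = 192 * K ^ 2 := by field_simp; ring
      calc (N : ℝ) ^ (d + 1) ≤ N ^ (d * 2) := pow_le_pow_right₀ hN1 (by omega)
        _ = (N ^ d) ^ 2 := pow_mul _ _ _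
        _ ≤ (192 * K ^ 2 / δ ^ 2) ^ 2 := by gcongr
        _ = (192 * B ^ 2) ^ 2 / δ ^ (8 * A + 4) := by
          rw [hK, div_pow, div_pow, ← pow_mul, ← pow_mul, pow_add,
            show 8 * A = 2 * A * 2 * 2 by ring, pow_mul _ (2 * A * 2) 2]; field_simp
        _ ≤ _ := hpow _ _ (by positivity) hD_ge3 (by omega)

/-! ### Phases whose leading coefficient is a multiple of `α` -/

/-- The denominator `0` is excluded: division by zero is zero, so the inequality would read
`|α| < 0`. -/
theorem pos_of_hasRatApprox {α : ℝ} {q : ℕ} (h : HasRatApprox α q) : 0 < q := by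
  rcases Nat.eq_zero_or_pos q with rfl | hq
  · obtain ⟨a, -, h2⟩ := h
    simp at h2
    exact absurd h2 (not_lt.mpr (abs_nonneg _))
  · exact hq

/-- If `α` has a rational approximation of denominator `q`, then its small positive multiples keep
away from the integers. -/
theorem nd_mul_ge {α : ℝ} {q : ℕ} (h : HasRatApprox α q) (k : ℕ) (hk : 1 ≤ k) (hkq : 2 * k ≤ q) :
    1 / (2 * (q : ℝ)) ≤ nd (k * α) := by
  have hq := pos_of_hasRatApprox h
  obtain ⟨a, h1, h2⟩ := h
  have hq' : (0 : ℝ) < q := by exact_mod_cast hq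
  have hnd : ¬ (q : ℤ) ∣ k * a := by
    intro hd
    have h3 : (q : ℤ) ∣ k := (Int.isCoprime_iff_gcd_eq_one.mpr (by rwa [Int.gcd_comm])).dvd_of_dvd_mul_right hd
    have := Nat.le_of_dvd hk (by exact_mod_cast h3)
    omega
  have h4 := nd_rat_ge _ q hq hnd
  have h5 := nd_le_add (((k * a : ℤ) : ℝ) / q) (k * α)
  have h6 : |((k * a : ℤ) : ℝ) / q - k * α| ≤ 1 / (2 * q) := by
    have e : ((k * a : ℤ) : ℝ) / q - k * α = - (k * (α - a / q)) := by push_cast; ring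
    rw [e, abs_neg, abs_mul, Nat.abs_cast]
    calc (k : ℝ) * |α - a / q| ≤ k * (1 / q ^ 2) := by gcongr
      _ ≤ (q / 2) * (1 / q ^ 2) := by
        have : (2 : ℝ) * k ≤ q := by exact_mod_cast hkq
        gcongr; linarith
      _ = 1 / (2 * q) := by field_simp
  have h7 : 1 / (q : ℝ) = 1 / (2 * q) + 1 / (2 * q) := by field_simp; norm_num
  linarith

open Polynomial in
/-- Weyl's inequality for a phase whose coefficient of degree `d` is a bounded nonzero integer
multiple `κα`. The multiplier `k` given by `weyl_inverse` either satisfies `2k|κ| > q`, or it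
brings `k|κ|α` so close to an integer that `nd_mul_ge` limits `δ`; in both cases
`δ ^ (10 ^ d)` is `O(1 / q + q / N ^ d)`. -/
theorem weyl_bound (d : ℕ) (hd : 1 ≤ d) (B : ℕ) : ∃ C : ℝ, 1 ≤ C ∧ ∀ (N : ℕ), 0 < N →
    ∀ (α : ℝ) (q : ℕ), HasRatApprox α q → ∀ f : ℝ[X], f.natDegree ≤ d → ∀ κ : ℤ, κ ≠ 0 →
    κ.natAbs ≤ B → f.coeff d = κ * α → ∀ Δ : ℝ, 1 / q + q / (N : ℝ) ^ d ≤ Δ →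
    ∀ (a : ℤ) (m : ℕ), m ≤ N →
    ‖∑ t ∈ Finset.range m, eF (f.eval ((a + t : ℤ) : ℝ))‖ ≤
      C * N * Δ ^ (((10 : ℝ) ^ d)⁻¹ / 2) := by
  obtain ⟨C', hC', hW⟩ := weyl_inverse d hd
  set C1 : ℝ := 2 * (B + 1) * C' with hC1
  have hC1' : 1 ≤ C1 := by
    rw [hC1]; nlinarith [Nat.cast_nonneg (α := ℝ) B]
  refine ⟨C1, hC1', fun N hN α q hα f hf κ hκ hκB hcoeff Δ hΔ a m hm ↦ ?_⟩
  have hN' : (0 : ℝ) < N := by exact_mod_cast hN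
  have hq := pos_of_hasRatApprox hα
  have hq' : (0 : ℝ) < q := by exact_mod_cast hq
  have hΔ0 : 0 < Δ := lt_of_lt_of_le (by positivity) hΔ
  set S := ‖∑ t ∈ Finset.range m, eF (f.eval ((a + t : ℤ) : ℝ))‖ with hS
  have hSN : S ≤ N := by
    refine (norm_sum_le _ _).trans ?_
    simp only [norm_eF, Finset.sum_const, Finset.card_range, nsmul_eq_mul, mul_one]
    exact_mod_cast hm
  rcases le_or_gt 1 Δ with h1 | h1
  · have : 1 ≤ Δ ^ (((10 : ℝ) ^ d)⁻¹ / 2) := Real.one_le_rpow h1 (by positivity)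
    calc S ≤ 1 * N * 1 := by linarith
      _ ≤ _ := by gcongr
  rcases (norm_nonneg _ : 0 ≤ S).eq_or_lt with h0 | h0
  · have hS0 : S = 0 := h0.symm
    rw [hS0]; positivity
  set δ := S / N with hδ
  have hδ0 : 0 < δ := by positivity
  have hδ1 : δ ≤ 1 := by rw [hδ, div_le_one hN']; exact hSN
  obtain ⟨k, hk1, hk2, hk3⟩ := hW N hN δ hδ0 hδ1 f hf a m hm (by
    rw [hδ, div_mul_cancel₀ _ hN'.ne'])
  set A := 10 ^ d with hA
  have hκ1 : 1 ≤ κ.natAbs := Int.natAbs_pos.mpr hκ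
  have hκB' : (κ.natAbs : ℝ) ≤ B + 1 := by
    have : (κ.natAbs : ℝ) ≤ B := by exact_mod_cast hκB
    linarith
  have key : δ ^ A ≤ C1 * Δ := by
    refine le_trans ?_ (mul_le_mul_of_nonneg_left hΔ (by linarith))
    rcases le_or_gt (2 * (k * κ.natAbs)) q with h2 | h2
    · have h3 := nd_mul_ge hα (k * κ.natAbs) (Nat.mul_pos hk1 hκ1) h2
      have h4 : nd (((k * κ.natAbs : ℕ) : ℝ) * α) = nd (k * f.coeff d) := by
        rw [hcoeff]
        rcases Int.natAbs_eq κ with h | h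
        · have : (κ : ℝ) = κ.natAbs := by rw [← Int.cast_natCast, ← h]
          rw [this]; push_cast; ring_nf
        · have : (κ : ℝ) = -κ.natAbs := by
            rw [← Int.cast_natCast, ← Int.cast_neg, ← h]
          rw [this, ← nd_neg]; push_cast; ring_nf
      rw [h4] at h3
      have h5 := h3.trans hk3
      rw [div_div, div_le_div_iff₀ (by positivity) (by positivity), one_mul] at h5
      have h6 : δ ^ A ≤ 2 * C' * (q / N ^ d) := by
        rw [← mul_div_assoc, le_div_iff₀ (by positivity)]; linarith
      refine h6.trans ?_
      rw [hC1]
      have : 2 * C' ≤ 2 * (B + 1) * C' := by nlinarith [Nat.cast_nonneg (α := ℝ) B]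
      gcongr
      have : 0 ≤ 1 / (q : ℝ) := by positivity
      linarith
    · have h3 : (q : ℝ) ≤ C1 / δ ^ A := by
        have : (q : ℝ) ≤ 2 * (k * κ.natAbs) := by exact_mod_cast h2.le
        refine this.trans ?_
        calc 2 * (k * κ.natAbs : ℝ) ≤ 2 * ((C' / δ ^ A) * (B + 1)) := by gcongr
          _ = C1 / δ ^ A := by rw [hC1]; ring
      have h4 : δ ^ A ≤ C1 * (1 / q) := by
        rw [mul_one_div, le_div_iff₀ hq']
        rw [le_div_iff₀ (by positivity)] at h3
        linarith
      refine h4.trans ?_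
      gcongr
      have : 0 ≤ (q : ℝ) / N ^ d := by positivity
      linarith
  have hApos : 0 < A := by rw [hA]; positivity
  have hAr : ((10 : ℝ) ^ d) = (A : ℝ) := by rw [hA]; push_cast; rfl
  have hA1 : (1 : ℝ) ≤ A := by exact_mod_cast hApos
  have hfin : δ ≤ C1 * Δ ^ (((10 : ℝ) ^ d)⁻¹ / 2) := by
    calc δ = (δ ^ A) ^ ((A : ℝ)⁻¹) := (Real.pow_rpow_inv_natCast hδ0.le hApos.ne').symm
      _ ≤ (C1 * Δ) ^ ((A : ℝ)⁻¹) := by gcongr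
      _ = C1 ^ ((A : ℝ)⁻¹) * Δ ^ ((A : ℝ)⁻¹) := Real.mul_rpow (by linarith) hΔ0.le
      _ ≤ C1 * Δ ^ (((10 : ℝ) ^ d)⁻¹ / 2) := by
        rw [hAr]
        refine mul_le_mul ?_ ?_ (by positivity) (by linarith)
        · exact (Real.rpow_le_rpow_of_exponent_le hC1' (inv_le_one_of_one_le₀ hA1)).trans_eq
            (Real.rpow_one _)
        · refine Real.rpow_le_rpow_of_exponent_ge hΔ0 h1.le ?_
          have : 0 ≤ (A : ℝ)⁻¹ := by positivity
          linarith
  calc S = δ * N := by rw [hδ, div_mul_cancel₀ _ hN'.ne']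
    _ ≤ (C1 * Δ ^ (((10 : ℝ) ^ d)⁻¹ / 2)) * N := by gcongr
    _ = _ := by ring

/-! ### Cutting intervals at breakpoints -/

/-- An order-convex finite set of integers is an interval, so a sum over it can be written as a sum
over consecutive integers. -/
theorem sum_ordConnected (s : Finset ℤ) (hs : ∀ x ∈ s, ∀ y ∈ s, ∀ z, x ≤ z → z ≤ y → z ∈ s)
    (g : ℤ → ℂ) : ∃ a : ℤ, ∑ t ∈ s, g t = ∑ t ∈ Finset.range s.card, g (a + t) := by
  rcases s.eq_empty_or_nonempty with rfl | hne
  · exact ⟨0, by simp⟩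
  set a := s.min' hne
  set b := s.max' hne
  have hsI : s = Finset.Icc a b := by
    ext z
    rw [Finset.mem_Icc]
    exact ⟨fun hz ↦ ⟨s.min'_le z hz, s.le_max' z hz⟩,
      fun hz ↦ hs _ (s.min'_mem hne) _ (s.max'_mem hne) z hz.1 hz.2⟩
  refine ⟨a, ?_⟩
  rw [hsI, Int.card_Icc]
  refine Finset.sum_nbij' (fun t ↦ (t - a).toNat) (fun n ↦ a + n) ?_ ?_ ?_ ?_ ?_
  · intro t ht; rw [Finset.mem_Icc] at ht; rw [Finset.mem_range]; omega
  · intro n hn; rw [Finset.mem_range] at hn; rw [Finset.mem_Icc]; omega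
  · intro t ht; rw [Finset.mem_Icc] at ht; omega
  · intro n hn; omega
  · intro t ht; rw [Finset.mem_Icc] at ht; congr 1; omega

/-- A sum over an interval is bounded by the number of pieces times the largest sum over a
subinterval whose hull contains no point of `B`. A piece consists of the integers `t` sharing both
the number of points of `B` less than `t` and the number of points of `B` at most `t`; a point of
`B` that is itself an integer gives a piece of one element, to which the condition with `x < y` does
not apply. -/
theorem piecewise_bound (B : Finset ℝ) (s : Finset ℤ)
    (hs : ∀ x ∈ s, ∀ y ∈ s, ∀ z, x ≤ z → z ≤ y → z ∈ s) (u : ℤ → ℂ) (T : ℝ)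
    (h : ∀ s' ⊆ s, (∀ x ∈ s', ∀ y ∈ s', ∀ z, x ≤ z → z ≤ y → z ∈ s') →
      (∀ x ∈ s', ∀ y ∈ s', x < y → ∀ b ∈ B, b ∉ Set.Icc (x : ℝ) y) → ‖∑ t ∈ s', u t‖ ≤ T) :
    ‖∑ t ∈ s, u t‖ ≤ (B.card + 1) ^ 2 * T := by
  let φ : ℤ → ℕ × ℕ := fun t ↦
    ((B.filter (fun b ↦ b < (t : ℝ))).card, (B.filter (fun b ↦ b ≤ (t : ℝ))).card)
  have hmono1 : ∀ x y : ℤ, x ≤ y → (φ x).1 ≤ (φ y).1 := fun x y hxy ↦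
    Finset.card_le_card fun b hb ↦ by
      rw [Finset.mem_filter] at hb ⊢
      exact ⟨hb.1, hb.2.trans_le (by exact_mod_cast hxy)⟩
  have hmono2 : ∀ x y : ℤ, x ≤ y → (φ x).2 ≤ (φ y).2 := fun x y hxy ↦
    Finset.card_le_card fun b hb ↦ by
      rw [Finset.mem_filter] at hb ⊢
      exact ⟨hb.1, hb.2.trans (by exact_mod_cast hxy)⟩
  have hmaps : ∀ t ∈ s, φ t ∈ Finset.range (B.card + 1) ×ˢ Finset.range (B.card + 1) := by
    intro t _
    simp only [φ, Finset.mem_product, Finset.mem_range, Nat.lt_succ_iff]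
    exact ⟨Finset.card_filter_le _ _, Finset.card_filter_le _ _⟩
  rw [← Finset.sum_fiberwise_of_maps_to hmaps]
  refine (norm_sum_le _ _).trans ((Finset.sum_le_card_nsmul _ _ T fun p hp ↦ ?_).trans_eq ?_)
  · refine h _ (Finset.filter_subset _ _) ?_ ?_
    · intro x hx y hy z hxz hzy
      rw [Finset.mem_filter] at hx hy ⊢
      refine ⟨hs x hx.1 y hy.1 z hxz hzy, ?_⟩
      rw [← hx.2]
      have e : φ x = φ y := hx.2.trans hy.2.symm
      refine Prod.ext (le_antisymm ?_ (hmono1 _ _ hxz)) (le_antisymm ?_ (hmono2 _ _ hxz))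
      · rw [e]; exact hmono1 _ _ hzy
      · rw [e]; exact hmono2 _ _ hzy
    · intro x hx y hy hxy b hb hbI
      rw [Finset.mem_filter] at hx hy
      have e : φ x = φ y := hx.2.trans hy.2.symm
      have hxy' : (x : ℝ) < y := by exact_mod_cast hxy
      rcases hbI.2.lt_or_eq with hlt | heq
      · -- `b` lies in `[x, y)` and is counted by the first coordinate at `y` only
        have : (φ x).1 < (φ y).1 := by
          refine Finset.card_lt_card (Finset.ssubset_iff_of_subset (fun c hc ↦ ?_) |>.mpr ⟨b, ?_, ?_⟩)
          · rw [Finset.mem_filter] at hc ⊢; exact ⟨hc.1, hc.2.trans hxy'⟩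
          · rw [Finset.mem_filter]; exact ⟨hb, hlt⟩
          · rw [Finset.mem_filter]; exact fun hc ↦ absurd hc.2 (not_lt.mpr hbI.1)
        rw [e] at this; exact lt_irrefl _ this
      · have : (φ x).2 < (φ y).2 := by
          refine Finset.card_lt_card (Finset.ssubset_iff_of_subset (fun c hc ↦ ?_) |>.mpr ⟨b, ?_, ?_⟩)
          · rw [Finset.mem_filter] at hc ⊢; exact ⟨hc.1, hc.2.trans hxy'.le⟩
          · rw [Finset.mem_filter]; exact ⟨hb, heq.le⟩
          · rw [Finset.mem_filter, heq]; exact fun hc ↦ absurd hc.2 (not_le.mpr hxy')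
        rw [e] at this; exact lt_irrefl _ this
  · rw [Finset.card_product, Finset.card_range, nsmul_eq_mul]; push_cast; ring

open Polynomial in
/-- A linear combination of logarithms of quadratic polynomials crosses the level `c0` a bounded
number of times, uniformly in the polynomials, in the coefficients and in the level. The derivative
is `p / P` with `P = ∏ Q i` and `p` of degree at most twice the number of factors, so Rolle's
theorem bounds the number of solutions of `G = c0` between consecutive roots of `P * p`. If `p = 0`
then `G` is constant there. -/
theorem breakpoints {ι : Type*} [Fintype ι] (Q : ι → ℝ[X]) (hQ : ∀ i, Q i ≠ 0)
    (hdeg : ∀ i, (Q i).natDegree ≤ 2) (c : ι → ℝ) (c0 : ℝ) :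
    ∃ B : Finset ℝ, B.card ≤ 8 * Fintype.card ι + 1 ∧
      (∀ i x, (Q i).eval x = 0 → x ∈ B) ∧
      ∀ x y : ℝ, x < y → (∀ b ∈ B, b ∉ Set.Icc x y) →
        (∑ i, c i * Real.log ((Q i).eval x) < c0 ↔ ∑ i, c i * Real.log ((Q i).eval y) < c0) ∧
        (∑ i, c i * Real.log ((Q i).eval x) ≤ c0 ↔ ∑ i, c i * Real.log ((Q i).eval y) ≤ c0) := by
  set n := Fintype.card ι with hn
  set P : ℝ[X] := ∏ i, Q i with hP
  have hP0 : P ≠ 0 := Finset.prod_ne_zero_iff.mpr fun i _ ↦ hQ i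
  set p : ℝ[X] := ∑ i, C (c i) * (derivative (Q i) * ∏ j ∈ Finset.univ.erase i, Q j) with hp
  set G : ℝ → ℝ := fun x ↦ ∑ i, c i * Real.log ((Q i).eval x) with hG
  have hprod : ∀ s : Finset ι, (∏ j ∈ s, Q j).natDegree ≤ 2 * s.card := by
    intro s
    refine (natDegree_prod_le _ _).trans ((Finset.sum_le_card_nsmul _ _ 2 fun i _ ↦ hdeg i).trans_eq ?_)
    rw [smul_eq_mul, mul_comm]
  have hPdeg : P.natDegree ≤ 2 * n := by simpa [hP, hn] using hprod Finset.univ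
  have hpdeg : p.natDegree ≤ 2 * n := by
    refine natDegree_sum_le_of_forall_le _ _ fun i _ ↦ ?_
    refine (natDegree_C_mul_le _ _).trans (natDegree_mul_le.trans ?_)
    have h1 := natDegree_derivative_le (Q i)
    have h2 := hprod (Finset.univ.erase i)
    rw [Finset.card_erase_of_mem (Finset.mem_univ i), Finset.card_univ, ← hn] at h2
    have h3 := hdeg i
    have h4 : 0 < n := Fintype.card_pos_iff.mpr ⟨i⟩
    omega
  set A : Finset ℝ := P.roots.toFinset ∪ p.roots.toFinset with hA
  have hAcard : A.card ≤ 4 * n := by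
    have h1 := (P.roots.toFinset_card_le).trans P.card_roots'
    have h2 := (p.roots.toFinset_card_le).trans p.card_roots'
    have h3 : A.card ≤ _ := Finset.card_union_le P.roots.toFinset p.roots.toFinset
    omega
  have hQA : ∀ i x, (Q i).eval x = 0 → x ∈ A := by
    intro i x hx
    rw [hA, Finset.mem_union, Multiset.mem_toFinset, mem_roots hP0, IsRoot, hP, eval_prod]
    exact Or.inl (Finset.prod_eq_zero (Finset.mem_univ i) hx)
  have hder : ∀ x, x ∉ A → HasDerivAt G (p.eval x / P.eval x) x := by
    intro x hx
    have hne : ∀ i, (Q i).eval x ≠ 0 := fun i h ↦ hx (hQA i x h)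
    have : p.eval x / P.eval x = ∑ i, c i * ((derivative (Q i)).eval x / (Q i).eval x) := by
      rw [hp, hP, eval_finsetSum, Finset.sum_div]
      refine Finset.sum_congr rfl fun i _ ↦ ?_
      rw [eval_mul, eval_C, eval_mul, ← Finset.mul_prod_erase Finset.univ Q (Finset.mem_univ i),
        eval_mul]
      have h2 : (∏ j ∈ Finset.univ.erase i, Q j).eval x ≠ 0 := by
        rw [eval_prod]; exact Finset.prod_ne_zero_iff.mpr fun j _ ↦ hne j
      have := hne i
      field_simp
    rw [this]
    exact HasDerivAt.fun_sum fun i _ ↦ (((Q i).hasDerivAt x).log (hne i)).const_mul (c i)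
  have hcont : ∀ x y : ℝ, (∀ b ∈ A, b ∉ Set.Icc x y) → ContinuousOn G (Set.Icc x y) :=
    fun x y h z hz ↦ (hder z fun hzA ↦ h z hzA hz).continuousAt.continuousWithinAt
  -- `p.roots` is empty when `p = 0`, so this case is separate
  by_cases hp0 : p = 0
  · refine ⟨A, by omega, hQA, fun x y hxy h ↦ ?_⟩
    obtain ⟨ξ, hξ, hslope⟩ := exists_hasDerivAt_eq_slope G (fun z ↦ p.eval z / P.eval z) hxy
      (hcont x y h) (fun z hz ↦ hder z fun hzA ↦ h z hzA ⟨hz.1.le, hz.2.le⟩)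
    rw [hp0, eval_zero, zero_div, eq_comm, div_eq_zero_iff] at hslope
    have : G y = G x := by
      rcases hslope with h1 | h1 <;> linarith
    change (G x < c0 ↔ G y < c0) ∧ (G x ≤ c0 ↔ G y ≤ c0)
    rw [this]; exact ⟨Iff.rfl, Iff.rfl⟩
  · have hpA : ∀ x, p.eval x = 0 → x ∈ A := by
      intro x hx
      rw [hA, Finset.mem_union, Multiset.mem_toFinset, Multiset.mem_toFinset, mem_roots hp0]
      exact Or.inr hx
    let ν : ℝ → ℕ := fun t ↦ (A.filter (fun b ↦ b < t)).card
    set Z : Set ℝ := {t | t ∉ A ∧ G t = c0} with hZ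
    -- Rolle: between consecutive points of `A` there is at most one point of `Z`
    have hlt : ∀ t ∈ Z, ∀ t' ∈ Z, t < t' → ν t ≠ ν t' := by
      intro t ht t' ht' htt' heq
      have hno : ∀ b ∈ A, b ∉ Set.Icc t t' := by
        intro b hb hbI
        have hb' : b < t' := lt_of_le_of_ne hbI.2 fun h ↦ ht'.1 (h ▸ hb)
        have : ν t < ν t' := by
          refine Finset.card_lt_card (Finset.ssubset_iff_of_subset (fun c hc ↦ ?_) |>.mpr ⟨b, ?_, ?_⟩)
          · rw [Finset.mem_filter] at hc ⊢; exact ⟨hc.1, hc.2.trans htt'⟩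
          · rw [Finset.mem_filter]; exact ⟨hb, hb'⟩
          · rw [Finset.mem_filter]; exact fun hc ↦ absurd hc.2 (not_lt.mpr hbI.1)
        omega
      obtain ⟨ξ, hξ, h0⟩ := exists_hasDerivAt_eq_zero htt' (hcont t t' hno) (ht.2.trans ht'.2.symm)
        (fun z hz ↦ hder z fun hzA ↦ hno z hzA ⟨hz.1.le, hz.2.le⟩)
      have hξI : ξ ∈ Set.Icc t t' := ⟨hξ.1.le, hξ.2.le⟩
      rcases div_eq_zero_iff.mp h0 with h1 | h1
      · exact hno ξ (hpA ξ h1) hξI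
      · refine hno ξ ?_ hξI
        rw [hA, Finset.mem_union, Multiset.mem_toFinset, mem_roots hP0]
        exact Or.inl h1
    have hinj : Set.InjOn ν Z := by
      intro t ht t' ht' heq
      rcases lt_trichotomy t t' with h | h | h
      · exact absurd heq (hlt t ht t' ht' h)
      · exact h
      · exact absurd heq.symm (hlt t' ht' t ht h)
    have hmaps : ∀ t, ν t ∈ Finset.range (A.card + 1) := fun t ↦
      Finset.mem_range.mpr (Nat.lt_succ_of_le (Finset.card_filter_le _ _))
    have hfin : Z.Finite := Set.Finite.of_injOn (fun t _ ↦ hmaps t) hinj (Finset.finite_toSet _)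
    have hZcard : hfin.toFinset.card ≤ A.card + 1 := by
      rw [← Finset.card_range (A.card + 1)]
      exact Finset.card_le_card_of_injOn ν (fun t _ ↦ hmaps t) (by
        intro t ht t' ht'
        exact hinj (by simpa using ht) (by simpa using ht'))
    refine ⟨A ∪ hfin.toFinset, ?_, fun i x hx ↦ Finset.mem_union_left _ (hQA i x hx),
      fun x y hxy h ↦ ?_⟩
    · have := Finset.card_union_le A hfin.toFinset
      omega
    have hno : ∀ b ∈ A, b ∉ Set.Icc x y := fun b hb ↦ h b (Finset.mem_union_left _ hb)
    have hnz : ∀ t ∈ Set.Icc x y, G t ≠ c0 := by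
      intro t ht h0
      have htA : t ∉ A := fun hA' ↦ hno t hA' ht
      exact h t (Finset.mem_union_right _ (hfin.mem_toFinset.mpr ⟨htA, h0⟩)) ht
    have hx := hnz x ⟨le_refl _, hxy.le⟩
    have hy := hnz y ⟨hxy.le, le_refl _⟩
    have hiff : G x < c0 ↔ G y < c0 := by
      constructor
      · intro h1
        by_contra h2
        obtain ⟨t, ht, ht'⟩ := intermediate_value_Icc hxy.le (hcont x y hno) ⟨h1.le, not_lt.mp h2⟩
        exact hnz t ht ht'
      · intro h1
        by_contra h2
        obtain ⟨t, ht, ht'⟩ := intermediate_value_Icc' hxy.le (hcont x y hno) ⟨h1.le, not_lt.mp h2⟩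
        exact hnz t ht ht'
    change (G x < c0 ↔ G y < c0) ∧ (G x ≤ c0 ↔ G y ≤ c0)
    exact ⟨hiff, by rw [le_iff_lt_or_eq, le_iff_lt_or_eq]; simp [hx, hy, hiff]⟩

section NumberFieldPart

variable {L : Type*} [Field L] [NumberField L]

open Polynomial mixedEmbedding

/-! ### The norm and the fundamental cone along a line -/

/-- The squared norm along a line in a real inner product space is a quadratic polynomial. -/
theorem sq_norm_line {E : Type*} [NormedAddCommGroup E] [InnerProductSpace ℝ E] (u v : E)
    (hv : v ≠ 0) : ∃ Q : ℝ[X], Q ≠ 0 ∧ Q.natDegree ≤ 2 ∧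
      ∀ t : ℝ, Q.eval t = ‖u + t • v‖ ^ 2 := by
  refine ⟨C (‖v‖ ^ 2) * X ^ 2 + C (2 * inner ℝ u v) * X + C (‖u‖ ^ 2), ?_,
    natDegree_quadratic_le, fun t ↦ ?_⟩
  · intro h
    have := congrArg (fun p ↦ coeff p 2) h
    simp only [coeff_add, coeff_C_mul, coeff_X_pow, coeff_X, coeff_C, coeff_zero] at this
    norm_num at this
    exact hv this
  · rw [norm_add_sq_real, _root_.norm_smul, real_inner_smul_right, mul_pow, Real.norm_eq_abs, sq_abs]
    simp only [eval_add, eval_mul, eval_C, eval_pow, eval_X]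
    ring

theorem sq_normAtPlace_line (u v : mixedSpace L) (w : InfinitePlace L)
    (hv : normAtPlace w v ≠ 0) : ∃ Q : ℝ[X], Q ≠ 0 ∧ Q.natDegree ≤ 2 ∧
      ∀ t : ℝ, Q.eval t = normAtPlace w (u + t • v) ^ 2 := by
  rcases w.isReal_or_isComplex with hw | hw
  · simp only [normAtPlace_apply_of_isReal hw] at hv ⊢
    exact sq_norm_line (u.1 ⟨w, hw⟩) (v.1 ⟨w, hw⟩) (norm_ne_zero_iff.mp hv)
  · simp only [normAtPlace_apply_of_isComplex hw] at hv ⊢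
    exact sq_norm_line (u.2 ⟨w, hw⟩) (v.2 ⟨w, hw⟩) (norm_ne_zero_iff.mp hv)

/-- The norm form of `L / ℚ` restricted to a line of direction `b` is a polynomial of degree at most
`[L : ℚ]`, whose coefficient in that degree is the norm of `b`. -/
theorem norm_line (y b : L) : ∃ F : ℝ[X], F.natDegree ≤ Module.finrank ℚ L ∧
    F.coeff (Module.finrank ℚ L) = (Algebra.norm ℚ b : ℝ) ∧
    ∀ t : ℤ, F.eval (t : ℝ) = (Algebra.norm ℚ (y + t * b) : ℝ) := by
  set bs := Module.finBasis ℚ L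
  set A := (Algebra.leftMulMatrix bs b).map (algebraMap ℚ ℝ) with hA
  set B := (Algebra.leftMulMatrix bs y).map (algebraMap ℚ ℝ) with hB
  have hdet : ∀ M : Matrix (Fin (Module.finrank ℚ L)) (Fin (Module.finrank ℚ L)) ℚ, (M.map (algebraMap ℚ ℝ)).det = ((M.det : ℚ) : ℝ) := fun M ↦ by
    have := RingHom.map_det (algebraMap ℚ ℝ) M
    rw [eq_ratCast] at this
    rw [this]; rfl
  refine ⟨Matrix.det ((X : ℝ[X]) • A.map C + B.map C), ?_, ?_, fun t ↦ ?_⟩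
  · simpa using natDegree_det_X_add_C_le A B
  · have := coeff_det_X_add_C_card A B
    rw [Fintype.card_fin] at this
    rw [this, hA, hdet, Algebra.norm_eq_matrix_det bs]
  · rw [Algebra.norm_eq_matrix_det bs, ← hdet, ← coe_evalRingHom, RingHom.map_det]
    congr 1
    have hlin : Algebra.leftMulMatrix bs (y + t * b) =
        Algebra.leftMulMatrix bs y + (t : ℚ) • Algebra.leftMulMatrix bs b := by
      rw [map_add, ← map_smul, Algebra.smul_def, map_intCast]
    ext i j
    rw [hlin]
    simp [hA, hB]
    ring

/-- The coordinates of `logMap x` in a basis of the logarithmic space are linear combinations of the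
logarithms of the squared absolute values of `x` (squares, because these are polynomial along
lines). -/
theorem repr_logMap {κ : Type*} (b : Module.Basis κ ℝ (Units.dirichletUnitTheorem.logSpace L)) (i : κ) :
    ∃ c : InfinitePlace L → ℝ, ∀ x : mixedSpace L, (∀ w, normAtPlace w x ≠ 0) →
      b.repr (logMap x) i = ∑ w, c w * Real.log (normAtPlace w x ^ 2) := by
  let g : (InfinitePlace L → ℝ) →ₗ[ℝ] Units.dirichletUnitTheorem.logSpace L := LinearMap.pi fun w ↦
    (w.1.mult : ℝ) • ((2⁻¹ : ℝ) • LinearMap.proj w.1 -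
      ((Module.finrank ℚ L : ℝ)⁻¹ * 2⁻¹) • ∑ w', (w'.mult : ℝ) • LinearMap.proj w')
  let φ : (InfinitePlace L → ℝ) →ₗ[ℝ] ℝ := (b.coord i) ∘ₗ g
  refine ⟨fun w ↦ φ (fun j ↦ if w = j then 1 else 0), fun x hx ↦ ?_⟩
  have h1 : logMap x = g (fun w ↦ Real.log (normAtPlace w x ^ 2)) := by
    ext w
    rw [logMap_apply, mixedEmbedding.norm_apply, Real.log_prod (fun w _ ↦ pow_ne_zero _ (hx w))]
    simp only [g, LinearMap.pi_apply, LinearMap.smul_apply, LinearMap.sub_apply,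
      LinearMap.proj_apply, LinearMap.sum_apply, smul_eq_mul, Real.log_pow]
    push_cast
    have : ∀ w' : InfinitePlace L, (w'.mult : ℝ) * (2 * Real.log (normAtPlace w' x)) =
      2 * (w'.mult * Real.log (normAtPlace w' x)) := fun w' ↦ by ring
    simp only [this, ← Finset.mul_sum]
    ring
  have h2 : b.repr (logMap x) i = φ (fun w ↦ Real.log (normAtPlace w x ^ 2)) := by
    rw [h1]; rfl
  rw [h2, LinearMap.pi_apply_eq_sum_univ φ]
  exact Finset.sum_congr rfl fun w _ ↦ by rw [smul_eq_mul, mul_comm]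

theorem log_norm_eq (x : mixedSpace L) (hx : ∀ w, normAtPlace w x ≠ 0) :
    Real.log (mixedEmbedding.norm x) =
      ∑ w : InfinitePlace L, (w.mult / 2 : ℝ) * Real.log (normAtPlace w x ^ 2) := by
  rw [mixedEmbedding.norm_apply, Real.log_prod (fun w _ ↦ pow_ne_zero _ (hx w))]
  refine Finset.sum_congr rfl fun w _ ↦ ?_
  rw [Real.log_pow, Real.log_pow]; push_cast; ring

variable (L) in
/-- Membership in the part of norm at most `s` of the fundamental cone changes a bounded number of
times along a line, with a bound depending on `L` only. In logarithmic coordinates it amounts to the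
inequalities `0 ≤ ℓ i < 1` for the coordinates `ℓ i` in the basis of fundamental units, together
with `log N ≤ log s`, and `breakpoints` applies to each of these. -/
theorem cone_line : ∃ K : ℕ, ∀ u v : mixedSpace L, (∀ w, normAtPlace w v ≠ 0) →
    ∀ s : ℝ, 0 < s → ∃ B : Finset ℝ, B.card ≤ K ∧ ∀ x y : ℝ, x < y →
      (∀ b ∈ B, b ∉ Set.Icc x y) →
      ((u + x • v ∈ fundamentalCone L ∧ mixedEmbedding.norm (u + x • v) ≤ s) ↔
        (u + y • v ∈ fundamentalCone L ∧ mixedEmbedding.norm (u + y • v) ≤ s)) := by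
  set bs := (Units.basisUnitLattice L).ofZLatticeBasis ℝ _ with hbs
  choose c hc using fun i ↦ repr_logMap bs i
  set r := Fintype.card (Fin (Units.rank L))
  set n := Fintype.card (InfinitePlace L)
  refine ⟨(8 * n + 1) + (r * (8 * n + 1) + r * (8 * n + 1)), fun u v hv s hs ↦ ?_⟩
  choose Q hQ0 hQ2 hQ using fun w ↦ sq_normAtPlace_line u v w (hv w)
  obtain ⟨B0, hB0, hB0r, hB0s⟩ := breakpoints Q hQ0 hQ2 (fun w ↦ w.mult / 2) (Real.log s)
  choose B1 hB1 hB1r hB1s using fun i ↦ breakpoints Q hQ0 hQ2 (c i) 0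
  choose B2 hB2 hB2r hB2s using fun i ↦ breakpoints Q hQ0 hQ2 (c i) 1
  refine ⟨B0 ∪ (Finset.univ.biUnion B1 ∪ Finset.univ.biUnion B2), ?_, fun x y hxy h ↦ ?_⟩
  · refine (Finset.card_union_le _ _).trans (add_le_add hB0 ?_)
    refine (Finset.card_union_le _ _).trans (add_le_add ?_ ?_)
    · exact Finset.card_biUnion_le_card_mul _ _ _ fun i _ ↦ hB1 i
    · exact Finset.card_biUnion_le_card_mul _ _ _ fun i _ ↦ hB2 i
  have h0 : ∀ b ∈ B0, b ∉ Set.Icc x y := fun b hb ↦ h b (Finset.mem_union_left _ hb)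
  have h1 : ∀ i, ∀ b ∈ B1 i, b ∉ Set.Icc x y := fun i b hb ↦ h b (Finset.mem_union_right _
    (Finset.mem_union_left _ (Finset.mem_biUnion.mpr ⟨i, Finset.mem_univ i, hb⟩)))
  have h2 : ∀ i, ∀ b ∈ B2 i, b ∉ Set.Icc x y := fun i b hb ↦ h b (Finset.mem_union_right _
    (Finset.mem_union_right _ (Finset.mem_biUnion.mpr ⟨i, Finset.mem_univ i, hb⟩)))
  have hne : ∀ t ∈ Set.Icc x y, ∀ w, normAtPlace w (u + t • v) ≠ 0 := by
    intro t ht w hw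
    refine h0 t (hB0r w t ?_) ht
    rw [hQ, hw]; norm_num
  have key : ∀ t ∈ Set.Icc x y,
      ((u + t • v ∈ fundamentalCone L ∧ mixedEmbedding.norm (u + t • v) ≤ s) ↔
        ((∀ i, ¬ (∑ w, c i w * Real.log ((Q w).eval t) < 0) ∧
          ∑ w, c i w * Real.log ((Q w).eval t) < 1) ∧
          ∑ w : InfinitePlace L, (w.mult / 2 : ℝ) * Real.log ((Q w).eval t) ≤ Real.log s)) := by
    intro t ht
    have hn := hne t ht
    have hn0 := mixedEmbedding.norm_ne_zero_iff.mpr hn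
    have hnpos : 0 < mixedEmbedding.norm (u + t • v) :=
      lt_of_le_of_ne (mixedEmbedding.norm_nonneg _) hn0.symm
    simp only [hQ]
    rw [← log_norm_eq _ hn, Real.log_le_log_iff hnpos hs]
    refine and_congr_left fun _ ↦ ?_
    simp only [← hc _ _ hn, not_lt]
    constructor
    · intro hx i
      exact (ZSpan.mem_fundamentalDomain _).mp hx.1 i
    · intro hx
      exact ⟨(ZSpan.mem_fundamentalDomain _).mpr hx, hn0⟩
  rw [key x ⟨le_rfl, hxy.le⟩, key y ⟨hxy.le, le_rfl⟩, (hB0s x y hxy h0).2]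
  refine and_congr_left fun _ ↦ forall_congr' fun i ↦ ?_
  rw [(hB1s i x y hxy (h1 i)).1, (hB2s i x y hxy (h2 i)).1]

/-- The summand `e(α N(x) / D)` extended by zero outside the part of norm at most `s` of the
fundamental cone. -/
noncomputable def coneTerm (α : ℝ) (D : ℕ) (s : ℝ) (x : mixedSpace L) : ℂ :=
  if x ∈ fundamentalCone L ∧ mixedEmbedding.norm x ≤ s then
    eF (α * (mixedEmbedding.norm x / D)) else 0

theorem mixedEmbedding_line (y b : L) (t : ℤ) :
    mixedEmbedding L (y + t * b) = mixedEmbedding L y + (t : ℝ) • mixedEmbedding L b := by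
  rw [map_add, map_mul, map_intCast, Int.cast_smul_eq_zsmul, zsmul_eq_mul]

/-- The exponential sum over the cone points on a lattice line. Between breakpoints the sum is empty
or runs over consecutive integers, and the norm has constant sign there, so the phase is `±α / D`
times the norm polynomial, of leading coefficient `±κα` for `N(b) = κD`. The constant is uniform in
the base point `y` of the line. -/
theorem line_bound (b : L) (hb : b ≠ 0) (D : ℕ) (hD : 0 < D) (κ : ℤ)
    (hκ : Algebra.norm ℚ b = κ * D) :
    ∃ Cst : ℝ, 0 ≤ Cst ∧ ∀ N : ℕ, 0 < N → ∀ (α : ℝ) (q : ℕ), HasRatApprox α q →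
      ∀ Δ : ℝ, 1 / q + q / (N : ℝ) ^ Module.finrank ℚ L ≤ Δ → ∀ s : ℝ, 0 < s → ∀ y : L,
      ∀ S : Finset ℤ, (∀ x ∈ S, ∀ y ∈ S, ∀ z, x ≤ z → z ≤ y → z ∈ S) → S.card ≤ N →
      ‖∑ t ∈ S, coneTerm α D s (mixedEmbedding L y + (t : ℝ) • mixedEmbedding L b)‖ ≤
        Cst * N * Δ ^ (((10 : ℝ) ^ Module.finrank ℚ L)⁻¹ / 2) := by
  obtain ⟨C0, hC0, hW⟩ := weyl_bound (Module.finrank ℚ L) Module.finrank_pos κ.natAbs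
  obtain ⟨K, hK⟩ := cone_line L
  set d := Module.finrank ℚ L with hd
  refine ⟨((K + d : ℕ) + 1) ^ 2 * C0, by positivity, ?_⟩
  intro N hN α q hα Δ hΔ s hs y S hS hSN
  have hq : (0 : ℝ) < q := by exact_mod_cast pos_of_hasRatApprox hα
  have hN' : (0 : ℝ) < N := by exact_mod_cast hN
  have hΔ0 : 0 < Δ := lt_of_lt_of_le (by positivity) hΔ
  have hb0 : Algebra.norm ℚ b ≠ 0 := Algebra.norm_ne_zero_iff.mpr hb
  have hκ0 : κ ≠ 0 := by
    rintro rfl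
    rw [Int.cast_zero, zero_mul] at hκ
    exact hb0 hκ
  have hv : ∀ w, normAtPlace w (mixedEmbedding L b) ≠ 0 := fun w ↦ by
    rw [normAtPlace_apply]; exact (map_ne_zero w).mpr hb
  obtain ⟨F, hFd, hFc, hFe⟩ := norm_line y b
  have hF0 : F ≠ 0 := by
    rintro rfl
    rw [coeff_zero] at hFc
    exact hb0 (by exact_mod_cast hFc.symm)
  obtain ⟨B, hBK, hB⟩ := hK (mixedEmbedding L y) (mixedEmbedding L b) hv s hs
  set T := C0 * N * Δ ^ (((10 : ℝ) ^ d)⁻¹ / 2) with hT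
  have hT0 : 0 ≤ T := by positivity
  have hcard : ((B ∪ F.roots.toFinset).card : ℝ) ≤ (K + d : ℕ) := by
    have h1 := Finset.card_union_le B F.roots.toFinset
    have h2 := (F.roots.toFinset_card_le).trans F.card_roots'
    exact_mod_cast h1.trans (add_le_add hBK (h2.trans hFd))
  have hnorm : ∀ t : ℤ, mixedEmbedding.norm (mixedEmbedding L y + (t : ℝ) • mixedEmbedding L b) =
      |F.eval (t : ℝ)| := fun t ↦ by
    rw [← mixedEmbedding_line, norm_eq_norm, hFe, Rat.cast_abs]
  refine (piecewise_bound (B ∪ F.roots.toFinset) S hS _ T ?_).trans ?_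
  swap
  · calc ((B ∪ F.roots.toFinset).card + 1 : ℝ) ^ 2 * T ≤ ((K + d : ℕ) + 1) ^ 2 * T := by gcongr
      _ = _ := by rw [hT]; ring
  intro s' hs'S hs' hs'B
  rcases s'.eq_empty_or_nonempty with rfl | ⟨x0, hx0⟩
  · simpa using hT0
  -- on a piece, the cone condition and the sign of the norm form do not change
  have hcone : ∀ t ∈ s', (mixedEmbedding L y + (t : ℝ) • mixedEmbedding L b ∈ fundamentalCone L ∧
      mixedEmbedding.norm (mixedEmbedding L y + (t : ℝ) • mixedEmbedding L b) ≤ s) ↔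
      (mixedEmbedding L y + (x0 : ℝ) • mixedEmbedding L b ∈ fundamentalCone L ∧
      mixedEmbedding.norm (mixedEmbedding L y + (x0 : ℝ) • mixedEmbedding L b) ≤ s) := by
    intro t ht
    rcases lt_trichotomy t x0 with h | h | h
    · exact hB t x0 (by exact_mod_cast h) fun b hb ↦
        hs'B t ht x0 hx0 h b (Finset.mem_union_left _ hb)
    · rw [h]
    · exact (hB x0 t (by exact_mod_cast h) fun b hb ↦
        hs'B x0 hx0 t ht h b (Finset.mem_union_left _ hb)).symm
  have hroot : ∀ x ∈ s', ∀ z ∈ s', x < z → ∀ r ∈ Set.Icc (x : ℝ) z, F.eval r ≠ 0 := by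
    intro x hx z hz hxz r hr h0
    refine hs'B x hx z hz hxz r (Finset.mem_union_right _ ?_) hr
    rw [Multiset.mem_toFinset, mem_roots hF0]; exact h0
  have hsign : ∀ x ∈ s', ∀ z ∈ s', x < z → (0 ≤ F.eval (x : ℝ) ↔ 0 ≤ F.eval (z : ℝ)) := by
    intro x hx z hz hxz
    have hxz' : (x : ℝ) ≤ z := by exact_mod_cast hxz.le
    constructor
    · intro h1
      by_contra h2
      obtain ⟨r, hr, h0⟩ := intermediate_value_Icc' hxz' F.continuous.continuousOn
        ⟨(not_le.mp h2).le, h1⟩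
      exact hroot x hx z hz hxz r hr h0
    · intro h1
      by_contra h2
      obtain ⟨r, hr, h0⟩ := intermediate_value_Icc hxz' F.continuous.continuousOn
        ⟨(not_le.mp h2).le, h1⟩
      exact hroot x hx z hz hxz r hr h0
  have hsign' : ∀ t ∈ s', (0 ≤ F.eval (t : ℝ) ↔ 0 ≤ F.eval (x0 : ℝ)) := by
    intro t ht
    rcases lt_trichotomy t x0 with h | h | h
    · exact hsign t ht x0 hx0 h
    · rw [h]
    · exact (hsign x0 hx0 t ht h).symm
  by_cases hc : mixedEmbedding L y + (x0 : ℝ) • mixedEmbedding L b ∈ fundamentalCone L ∧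
      mixedEmbedding.norm (mixedEmbedding L y + (x0 : ℝ) • mixedEmbedding L b) ≤ s
  swap
  · refine (congrArg norm (Finset.sum_eq_zero fun t ht ↦ ?_)).trans_le (norm_zero.trans_le hT0)
    rw [coneTerm, if_neg fun h ↦ hc ((hcone t ht).mp h)]
  obtain ⟨ε, hε, hεF⟩ : ∃ ε : ℤ, (ε = 1 ∨ ε = -1) ∧ ∀ t ∈ s',
      |F.eval (t : ℝ)| = ε * F.eval (t : ℝ) := by
    by_cases h0 : 0 ≤ F.eval (x0 : ℝ)
    · exact ⟨1, Or.inl rfl, fun t ht ↦ by rw [abs_of_nonneg ((hsign' t ht).mpr h0)]; simp⟩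
    · refine ⟨-1, Or.inr rfl, fun t ht ↦ ?_⟩
      rw [abs_of_neg (not_le.mp fun h ↦ h0 ((hsign' t ht).mp h))]; simp
  have hD' : (D : ℝ) ≠ 0 := by exact_mod_cast hD.ne'
  set f : ℝ[X] := Polynomial.C (ε * α / D) * F with hf
  have hsum : ∑ t ∈ s', coneTerm α D s (mixedEmbedding L y + (t : ℝ) • mixedEmbedding L b) =
      ∑ t ∈ s', eF (f.eval (t : ℝ)) := by
    refine Finset.sum_congr rfl fun t ht ↦ ?_
    rw [coneTerm, if_pos ((hcone t ht).mpr hc), hnorm, hεF t ht, hf, eval_mul, eval_C]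
    congr 1; ring
  obtain ⟨a, ha⟩ := sum_ordConnected s' hs' fun t ↦ eF (f.eval (t : ℝ))
  rw [hsum, ha]
  refine hW N hN α q hα f ((natDegree_C_mul_le _ _).trans hFd) (ε * κ) ?_ ?_ ?_ Δ hΔ a s'.card
    ((Finset.card_le_card hs'S).trans hSN)
  · rcases hε with rfl | rfl <;> simpa using hκ0
  · rcases hε with rfl | rfl <;> simp
  · rw [hf, coeff_C_mul, hFc, hκ]
    push_cast
    field_simp

/-! ### Slicing a box into lines -/

variable (L) in
/-- Points of norm at most `c ^ d` in the fundamental cone have coordinates `O(c)` in any basis: the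
cone is homogeneous and its part of norm at most `1` is bounded. -/
theorem repr_bound {ι : Type*} [Fintype ι] (b : Module.Basis ι ℝ (mixedSpace L)) :
    ∃ C : ℝ, 1 ≤ C ∧ ∀ c : ℝ, 0 < c → ∀ x ∈ fundamentalCone L,
      mixedEmbedding.norm x ≤ c ^ Module.finrank ℚ L → ∀ i, |b.repr x i| ≤ C * c := by
  obtain ⟨R, hR⟩ := isBounded_iff_forall_norm_le.mp (fundamentalCone.isBounded_normLeOne L)
  set φ := LinearMap.toContinuousLinearMap b.equivFun.toLinearMap with hφ
  refine ⟨max 1 (‖φ‖ * R), le_max_left _ _, fun c hc x hx hxc i ↦ ?_⟩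
  have h1 : c⁻¹ • x ∈ fundamentalCone.normLeOne L := by
    refine ⟨(fundamentalCone.smul_mem_iff_mem (inv_ne_zero hc.ne')).mpr hx, ?_⟩
    change mixedEmbedding.norm (c⁻¹ • x) ≤ 1
    rw [mixedEmbedding.norm_smul, abs_of_pos (inv_pos.mpr hc), inv_pow, inv_mul_le_iff₀
      (by positivity), mul_one]
    exact hxc
  have h2 : |b.repr (c⁻¹ • x) i| ≤ max 1 (‖φ‖ * R) := by
    have h3 : ‖φ (c⁻¹ • x) i‖ ≤ ‖φ‖ * R := (norm_le_pi_norm _ i).trans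
      ((φ.le_opNorm _).trans (mul_le_mul_of_nonneg_left (hR _ h1) (norm_nonneg _)))
    exact h3.trans (le_max_right _ _)
  rw [map_smul, Finsupp.smul_apply, smul_eq_mul, abs_mul, abs_of_pos (inv_pos.mpr hc),
    inv_mul_le_iff₀ hc] at h2
  linarith

/-- The exponential sum over the lattice points of norm at most `X * D` in the fundamental cone.
They lie in a box of side `N ≍ (XD) ^ (1 / d)`, which is a union of `N ^ (d - 1)` lattice lines of
length `N` in the direction `i0`, and `line_bound` applies to each line. -/
theorem box_bound {ι : Type*} [Fintype ι] (b : Module.Basis ι ℝ (mixedSpace L)) (β : ι → L)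
    (hβ : ∀ i, b i = mixedEmbedding L (β i)) (i0 : ι) (D : ℕ) (hD : 0 < D) (κ : ℤ)
    (hκ : Algebra.norm ℚ (β i0) = κ * D) :
    ∃ Cst : ℝ, 0 ≤ Cst ∧ ∀ X : ℝ, 1 ≤ X → ∀ (α : ℝ) (q : ℕ), HasRatApprox α q →
      ∀ Δ : ℝ, 1 / q + q / X ≤ Δ →
      ∃ T : Finset (mixedSpace L), (∀ x, x ∈ T ↔ (x ∈ fundamentalCone L ∧
        x ∈ Submodule.span ℤ (Set.range b)) ∧ mixedEmbedding.norm x ≤ X * D) ∧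
      ‖∑ x ∈ T, eF (α * (mixedEmbedding.norm x / D))‖ ≤
        Cst * X * Δ ^ (((10 : ℝ) ^ Module.finrank ℚ L)⁻¹ / 2) := by
  have hcard : Fintype.card ι = Module.finrank ℚ L := by
    rw [← Module.finrank_eq_card_basis b, mixedEmbedding.finrank]
  have hβ0 : β i0 ≠ 0 := fun h ↦ b.ne_zero i0 (by rw [hβ, h, map_zero])
  obtain ⟨C0, hC0, hrep⟩ := repr_bound L b
  obtain ⟨C1, hC1, hline⟩ := line_bound (β i0) hβ0 D hD κ hκ
  set d := Module.finrank ℚ L with hd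
  have hdpos : 0 < d := Module.finrank_pos
  refine ⟨C1 * (5 * C0) ^ d * D, by positivity, fun X hX α q hα Δ hΔ ↦ ?_⟩
  have hq : (0 : ℝ) < q := by exact_mod_cast pos_of_hasRatApprox hα
  have hΔ0 : 0 < Δ := lt_of_lt_of_le (by positivity) hΔ
  have hD1 : (1 : ℝ) ≤ D := by exact_mod_cast hD
  have hXD : 1 ≤ X * D := one_le_mul_of_one_le_of_one_le hX hD1
  obtain ⟨c, hc1, hcd⟩ : ∃ c : ℝ, 1 ≤ c ∧ c ^ d = X * D :=
    ⟨(X * D) ^ ((d : ℝ)⁻¹), Real.one_le_rpow hXD (by positivity),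
      Real.rpow_inv_natCast_pow (by positivity) hdpos.ne'⟩
  set M := ⌈C0 * c⌉₊ with hM
  set N := 2 * M + 1 with hN
  have hM1 : C0 * c ≤ M := Nat.le_ceil _
  have hM2 : (M : ℝ) < C0 * c + 1 := Nat.ceil_lt_add_one (by positivity)
  have hC0c : 1 ≤ C0 * c := one_le_mul_of_one_le_of_one_le hC0 hc1
  have hNM : (N : ℝ) = 2 * M + 1 := by rw [hN]; push_cast; ring
  have hNle : (N : ℝ) ≤ 5 * C0 * c := by rw [hNM]; linarith
  have hcN : c ≤ N := by
    have : c ≤ C0 * c := le_mul_of_one_le_left (by linarith) hC0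
    rw [hNM]; linarith
  have hXN : X ≤ (N : ℝ) ^ d := by
    calc X ≤ X * D := le_mul_of_one_le_right (by linarith) hD1
      _ = c ^ d := hcd.symm
      _ ≤ _ := by gcongr
  have hΔN : 1 / q + q / (N : ℝ) ^ d ≤ Δ := by
    refine le_trans ?_ hΔ
    gcongr
  let pt : (ι → ℤ) → mixedSpace L := fun n ↦ ∑ i, (n i : ℝ) • b i
  have hpt : ∀ n i, b.repr (pt n) i = n i := by
    intro n i
    have := congrFun (b.equivFun_symm_apply (fun i ↦ (n i : ℝ)) ▸
      b.equivFun.apply_symm_apply (fun i ↦ (n i : ℝ))) i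
    exact this
  have hinj : Function.Injective pt := by
    intro n m h
    funext i
    have := (hpt n i).symm.trans ((congrArg (fun x ↦ b.repr x i) h).trans (hpt m i))
    exact_mod_cast this
  set box : Finset (ι → ℤ) := Fintype.piFinset fun _ ↦ Finset.Icc (-(M : ℤ)) M with hbox
  set good : (ι → ℤ) → Prop := fun n ↦
    pt n ∈ fundamentalCone L ∧ mixedEmbedding.norm (pt n) ≤ X * D with hgood
  refine ⟨(box.filter good).image pt, fun x ↦ ?_, ?_⟩
  · rw [Finset.mem_image]
    constructor
    · rintro ⟨n, hn, rfl⟩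
      obtain ⟨-, hn1, hn2⟩ := Finset.mem_filter.mp hn
      refine ⟨⟨hn1, Submodule.sum_mem _ fun i _ ↦ ?_⟩, hn2⟩
      rw [Int.cast_smul_eq_zsmul]
      exact Submodule.smul_mem _ _ (Submodule.subset_span ⟨i, rfl⟩)
    · rintro ⟨⟨hx1, hx2⟩, hx3⟩
      choose n hn using (b.mem_span_iff_repr_mem ℤ x).mp hx2
      have hx : pt n = x := b.ext_elem fun i ↦ by rw [hpt, ← hn]; rfl
      refine ⟨n, Finset.mem_filter.mpr ⟨Fintype.mem_piFinset.mpr fun i ↦ ?_, ?_⟩, hx⟩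
      · have h1 := (hrep c (by linarith) x hx1 (hx3.trans_eq hcd.symm) i).trans hM1
        rw [← hx, hpt, abs_le] at h1
        rw [Finset.mem_Icc]
        exact ⟨by exact_mod_cast h1.1, by exact_mod_cast h1.2⟩
      · rw [hgood]; simp only [hx]; exact ⟨hx1, hx3⟩
  have hs1 : ∑ x ∈ (box.filter good).image pt, eF (α * (mixedEmbedding.norm x / D)) =
      ∑ n ∈ box, coneTerm α D (X * D) (pt n) := by
    rw [Finset.sum_image fun _ _ _ _ h ↦ hinj h, Finset.sum_filter]
    rfl
  -- the lines in direction `i0` are indexed by the points of the box with coordinate `0` there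
  set box0 : Finset (ι → ℤ) :=
    Fintype.piFinset (Function.update (fun _ ↦ Finset.Icc (-(M : ℤ)) M) i0 {0}) with hbox0
  have hIcc : (Finset.Icc (-(M : ℤ)) M).card = N := by rw [Int.card_Icc]; omega
  have hbox0c : box0.card = N ^ (d - 1) := by
    rw [hbox0, Fintype.card_piFinset]
    have : (fun i ↦ (Function.update (fun _ ↦ Finset.Icc (-(M : ℤ)) M) i0 {0} i).card) =
        Function.update (fun _ ↦ N) i0 1 := by
      funext i
      by_cases h : i = i0
      · subst h; simp
      · simp only [Function.update_of_ne h, hIcc]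
    rw [this, Finset.prod_update_of_mem (Finset.mem_univ i0), one_mul, Finset.prod_const,
      Finset.card_sdiff_of_subset (Finset.subset_univ _), Finset.card_univ, hcard,
      Finset.card_singleton]
  have hmaps : ∀ n ∈ box, Function.update n i0 0 ∈ box0 := by
    intro n hn
    rw [hbox0, Fintype.mem_piFinset]
    intro i
    by_cases h : i = i0
    · subst h; simp
    · rw [Function.update_of_ne h, Function.update_of_ne h]
      exact Fintype.mem_piFinset.mp hn i
  have hupd : ∀ (p : ι → ℤ) (t : ℤ), p i0 = 0 → pt (Function.update p i0 t) =
      mixedEmbedding L (∑ i, (p i : L) * β i) + (t : ℝ) • mixedEmbedding L (β i0) := by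
    intro p t hp
    have h1 : mixedEmbedding L (∑ i, (p i : L) * β i) = pt p := by
      rw [map_sum]
      refine Finset.sum_congr rfl fun i _ ↦ ?_
      rw [map_mul, map_intCast, Int.cast_smul_eq_zsmul, zsmul_eq_mul, hβ]
    rw [h1, ← hβ]
    refine b.ext_elem fun i ↦ ?_
    rw [hpt, map_add, Finsupp.add_apply, hpt, map_smul, Finsupp.smul_apply, b.repr_self]
    by_cases h : i = i0
    · subst h; simp [hp]
    · rw [Function.update_of_ne h, Finsupp.single_eq_of_ne h]; simp
  rw [hs1, ← Finset.sum_fiberwise_of_maps_to hmaps]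
  have hfib : ∀ p ∈ box0, ‖∑ n ∈ box with Function.update n i0 0 = p,
      coneTerm α D (X * D) (pt n)‖ ≤ C1 * N * Δ ^ (((10 : ℝ) ^ d)⁻¹ / 2) := by
    intro p hp
    have hp' := Fintype.mem_piFinset.mp hp
    have hp0 : p i0 = 0 := by simpa using hp' i0
    have hpi : ∀ i, i ≠ i0 → p i ∈ Finset.Icc (-(M : ℤ)) M := fun i hi ↦ by
      have := hp' i
      rwa [Function.update_of_ne hi] at this
    have e : ∑ n ∈ box with Function.update n i0 0 = p, coneTerm α D (X * D) (pt n) =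
        ∑ t ∈ Finset.Icc (-(M : ℤ)) M, coneTerm α D (X * D)
          (mixedEmbedding L (∑ i, (p i : L) * β i) + (t : ℝ) • mixedEmbedding L (β i0)) := by
      refine Finset.sum_nbij' (fun n ↦ n i0) (fun t ↦ Function.update p i0 t) ?_ ?_ ?_ ?_ ?_
      · intro n hn
        exact Fintype.mem_piFinset.mp (Finset.mem_filter.mp hn).1 i0
      · intro t ht
        rw [Finset.mem_filter, Fintype.mem_piFinset]
        refine ⟨fun i ↦ ?_, ?_⟩
        · by_cases h : i = i0
          · subst h; simpa using ht
          · rw [Function.update_of_ne h]; exact hpi i h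
        · rw [Function.update_idem, ← hp0, Function.update_eq_self]
      · intro n hn
        rw [← (Finset.mem_filter.mp hn).2, Function.update_idem, Function.update_eq_self]
      · intro t ht
        exact Function.update_self _ _ _
      · intro n hn
        rw [← hupd p _ hp0]
        congr 2
        rw [← (Finset.mem_filter.mp hn).2, Function.update_idem, Function.update_eq_self]
    rw [e]
    refine hline N (by omega) α q hα Δ hΔN (X * D) (by linarith) _ _ ?_ hIcc.le
    intro x hx y hy z hxz hzy
    rw [Finset.mem_Icc] at hx hy ⊢
    omega
  refine (norm_sum_le _ _).trans ((Finset.sum_le_card_nsmul _ _ _ hfib).trans ?_)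
  rw [hbox0c, nsmul_eq_mul]
  push_cast
  have hNd : (N : ℝ) ^ (d - 1) * N = N ^ d := by rw [← pow_succ, Nat.sub_add_cancel hdpos]
  calc (N : ℝ) ^ (d - 1) * (C1 * N * Δ ^ (((10 : ℝ) ^ d)⁻¹ / 2))
      = C1 * N ^ d * Δ ^ (((10 : ℝ) ^ d)⁻¹ / 2) := by rw [← hNd]; ring
    _ ≤ C1 * (5 * C0 * c) ^ d * Δ ^ (((10 : ℝ) ^ d)⁻¹ / 2) := by gcongr
    _ = _ := by rw [mul_pow, hcd]; ring

end NumberFieldPart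

section NumberFieldPart

variable {L : Type*} [Field L] [NumberField L]

open mixedEmbedding nonZeroDivisors

/-! ### Ideals and lattice points -/

/-- `box_bound` for the lattice of an ideal `J`: an element of `J` has norm divisible by `N(J)`, so
the phases along lattice lines have an integer multiple of `α` as leading coefficient. -/
theorem ideal_box_bound (J : (Ideal (𝓞 L))⁰) :
    ∃ Cst : ℝ, 0 ≤ Cst ∧ ∀ X : ℝ, 1 ≤ X → ∀ (α : ℝ) (q : ℕ), HasRatApprox α q →
      ∀ Δ : ℝ, 1 / q + q / X ≤ Δ →
      ∃ T : Finset (mixedSpace L), (∀ x, x ∈ T ↔ x ∈ fundamentalCone.idealSet L J ∧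
        mixedEmbedding.norm x ≤ X * Ideal.absNorm (J : Ideal (𝓞 L))) ∧
      ‖∑ x ∈ T, eF (α * (mixedEmbedding.norm x / Ideal.absNorm (J : Ideal (𝓞 L))))‖ ≤
        Cst * X * Δ ^ (((10 : ℝ) ^ Module.finrank ℚ L)⁻¹ / 2) := by
  set I := FractionalIdeal.mk0 L J with hI
  have hD := Ideal.absNorm_pos_of_nonZeroDivisors J
  have hne : Nonempty (Module.Free.ChooseBasisIndex ℤ I) := by
    rw [← Fintype.card_pos_iff, ← Module.finrank_eq_card_basis (fractionalIdealLatticeBasis L I),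
      mixedEmbedding.finrank]
    exact Module.finrank_pos
  obtain ⟨i0⟩ := hne
  obtain ⟨x, hxJ, hx⟩ : ∃ x ∈ (J : Ideal (𝓞 L)), (x : L) = basisOfFractionalIdeal L I i0 := by
    have key : ∀ z : L, z ∈ (I : FractionalIdeal (𝓞 L)⁰ L) →
        ∃ x ∈ (J : Ideal (𝓞 L)), (x : L) = z := by
      intro z hz
      rw [hI, FractionalIdeal.coe_mk0, FractionalIdeal.mem_coeIdeal] at hz
      exact hz
    exact key _ ((mem_span_basisOfFractionalIdeal L).mp (Submodule.subset_span ⟨i0, rfl⟩))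
  obtain ⟨κ, hκ⟩ := Ideal.absNorm_dvd_norm_of_mem hxJ
  have hnorm : Algebra.norm ℚ (basisOfFractionalIdeal L I i0) =
      κ * (Ideal.absNorm (J : Ideal (𝓞 L)) : ℕ) := by
    rw [← hx, ← Algebra.coe_norm_int, hκ]; push_cast; ring
  obtain ⟨Cst, hC, h⟩ := box_bound (fractionalIdealLatticeBasis L I) _
    (fractionalIdealLatticeBasis_apply L I) i0 _ hD κ hnorm
  refine ⟨Cst, hC, fun X hX α q hα Δ hΔ ↦ ?_⟩
  obtain ⟨T, hT, hbound⟩ := h X hX α q hα Δ hΔ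
  refine ⟨T, fun y ↦ ?_, hbound⟩
  rw [hT, span_idealLatticeBasis]
  rfl

/-- Multiplication by `J` sends the ideals of norm `n` in the class `C = [J]⁻¹` to the principal
ideals of norm `n * N(J)` divisible by `J`, and each of these has as many generators in the
fundamental cone as there are roots of unity in `L`. -/
theorem card_class_eq (C : ClassGroup (𝓞 L)) (J : (Ideal (𝓞 L))⁰) (hJ : ClassGroup.mk0 J = C⁻¹)
    (n : ℕ) :
    Nat.card {I : (Ideal (𝓞 L))⁰ // Ideal.absNorm (I : Ideal (𝓞 L)) = n ∧ ClassGroup.mk0 I = C} *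
      Units.torsionOrder L = Nat.card {a : fundamentalCone.idealSet L J //
        mixedEmbedding.norm (a : mixedSpace L) =
          ((n * Ideal.absNorm (J : Ideal (𝓞 L)) : ℕ) : ℝ)} := by
  rw [Nat.card_congr (fundamentalCone.idealSetEquivNorm L J _), Nat.card_prod, Units.torsionOrder]
  congr 1
  simp_rw [← nonZeroDivisors_dvd_iff_dvd_coe]
  refine Nat.card_congr ?_
  refine ((Equiv.dvd J).subtypeEquiv fun I ↦ ?_).trans
    (Equiv.subtypeSubtypeEquivSubtypeInter (fun I : (Ideal (𝓞 L))⁰ ↦ J ∣ I) _)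
  rw [← ClassGroup.mk0_eq_one_iff (SetLike.coe_mem _)]
  simp_rw [Equiv.dvd_apply, Submonoid.coe_mul, ← Submonoid.mul_def, map_mul, hJ,
    inv_mul_eq_one, mul_comm n, eq_comm, and_comm, and_congr_left_iff]
  exact fun _ ↦ (Nat.mul_right_inj (Ideal.absNorm_pos_of_nonZeroDivisors J).ne').symm

/-- The exponential sum over the ideals in one class, as a sum over points of the fundamental cone:
both sides are grouped by norm and compared through `card_class_eq`. -/
theorem class_sum_eq (C : ClassGroup (𝓞 L)) (J : (Ideal (𝓞 L))⁰) (hJ : ClassGroup.mk0 J = C⁻¹)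
    (X : ℝ) (hX : 1 ≤ X) (α : ℝ) (S : Finset (Ideal (𝓞 L))⁰)
    (hS : ∀ I, I ∈ S ↔ (Ideal.absNorm (I : Ideal (𝓞 L)) : ℝ) ≤ X ∧ ClassGroup.mk0 I = C)
    (T : Finset (mixedSpace L)) (hT : ∀ x, x ∈ T ↔ x ∈ fundamentalCone.idealSet L J ∧
        mixedEmbedding.norm x ≤ X * Ideal.absNorm (J : Ideal (𝓞 L))) :
    (∑ I ∈ S, eF (α * (Ideal.absNorm (I : Ideal (𝓞 L)) : ℝ))) * Units.torsionOrder L =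
      ∑ x ∈ T, eF (α * (mixedEmbedding.norm x / Ideal.absNorm (J : Ideal (𝓞 L)))) := by
  set D := Ideal.absNorm (J : Ideal (𝓞 L)) with hDdef
  have hD : 0 < D := Ideal.absNorm_pos_of_nonZeroDivisors J
  have hD' : (0 : ℝ) < D := by exact_mod_cast hD
  -- the norm of a lattice point divided by `D` is an integer, so the floor loses nothing
  let ν : mixedSpace L → ℕ := fun x ↦ ⌊mixedEmbedding.norm x / D⌋₊
  have hν : ∀ x ∈ fundamentalCone.idealSet L J, mixedEmbedding.norm x = (ν x : ℝ) * D := by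
    intro x hx
    obtain ⟨-, a, haJ, rfl⟩ := fundamentalCone.mem_idealSet.mp hx
    obtain ⟨k, hk⟩ := Int.natCast_dvd.mp (Ideal.absNorm_dvd_norm_of_mem haJ)
    have h1 : mixedEmbedding.norm (mixedEmbedding L (a : L)) = (k : ℝ) * D := by
      rw [norm_eq_norm, ← Algebra.coe_norm_int, ← Int.cast_abs, Int.abs_eq_natAbs, hk, hDdef]
      push_cast; ring
    have h2 : ν (mixedEmbedding L (a : L)) = k := by
      simp only [ν, h1]
      rw [mul_div_cancel_right₀ _ hD'.ne', Nat.floor_natCast]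
    rw [h2, h1]
  have hTn : ∀ x ∈ T, ν x ∈ Finset.range (⌊X⌋₊ + 1) := by
    intro x hx
    rw [Finset.mem_range, Nat.lt_succ_iff]
    exact Nat.floor_le_floor ((div_le_iff₀ hD').mpr ((hT x).mp hx).2)
  have hSn : ∀ I ∈ S, Ideal.absNorm (I : Ideal (𝓞 L)) ∈ Finset.range (⌊X⌋₊ + 1) := by
    intro I hI
    rw [Finset.mem_range, Nat.lt_succ_iff]
    exact Nat.le_floor ((hS I).mp hI).1
  rw [← Finset.sum_fiberwise_of_maps_to hTn, ← Finset.sum_fiberwise_of_maps_to hSn, Finset.sum_mul]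
  refine Finset.sum_congr rfl fun n hn ↦ ?_
  have hnX : (n : ℝ) ≤ X :=
    (Nat.le_floor_iff (by linarith)).mp (Nat.lt_succ_iff.mp (Finset.mem_range.mp hn))
  have e1 : ∑ I ∈ S.filter (fun I : (Ideal (𝓞 L))⁰ ↦ Ideal.absNorm (I : Ideal (𝓞 L)) = n),
      eF (α * (Ideal.absNorm (I : Ideal (𝓞 L)) : ℝ)) =
      (S.filter fun I : (Ideal (𝓞 L))⁰ ↦ Ideal.absNorm (I : Ideal (𝓞 L)) = n).card * eF (α * n) := by
    rw [Finset.sum_congr rfl fun I hI ↦ by rw [(Finset.mem_filter.mp hI).2], Finset.sum_const,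
      nsmul_eq_mul]
  have e2 : ∑ x ∈ T with ν x = n, eF (α * (mixedEmbedding.norm x / D)) =
      (T.filter fun x ↦ ν x = n).card * eF (α * n) := by
    rw [← nsmul_eq_mul, ← Finset.sum_const]
    refine Finset.sum_congr rfl fun x hx ↦ ?_
    obtain ⟨hx1, hx2⟩ := Finset.mem_filter.mp hx
    rw [hν x ((hT x).mp hx1).1, hx2, mul_div_cancel_right₀ _ hD'.ne']
  have c1 : (S.filter fun I : (Ideal (𝓞 L))⁰ ↦ Ideal.absNorm (I : Ideal (𝓞 L)) = n).card =
      Nat.card {I : (Ideal (𝓞 L))⁰ //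
        Ideal.absNorm (I : Ideal (𝓞 L)) = n ∧ ClassGroup.mk0 I = C} := by
    rw [Nat.subtype_card]
    intro I
    rw [Finset.mem_filter, hS]
    constructor
    · rintro ⟨⟨-, h1⟩, h2⟩; exact ⟨h2, h1⟩
    · rintro ⟨h2, h1⟩; exact ⟨⟨by rw [h2]; exact hnX, h1⟩, h2⟩
  have c2 : (T.filter fun x ↦ ν x = n).card = Nat.card {a : fundamentalCone.idealSet L J //
        mixedEmbedding.norm (a : mixedSpace L) = ((n * D : ℕ) : ℝ)} := by
    rw [Nat.card_congr (Equiv.subtypeSubtypeEquivSubtypeInter (· ∈ fundamentalCone.idealSet L J)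
      (fun a ↦ mixedEmbedding.norm a = ((n * D : ℕ) : ℝ))), Nat.subtype_card]
    intro x
    rw [Finset.mem_filter, hT]
    constructor
    · rintro ⟨⟨h1, -⟩, h2⟩
      exact ⟨h1, by rw [hν x h1, h2]; push_cast; rfl⟩
    · rintro ⟨h1, h2⟩
      push_cast at h2
      refine ⟨⟨h1, by rw [h2]; gcongr⟩, ?_⟩
      simp only [ν, h2]
      rw [mul_div_cancel_right₀ _ hD'.ne', Nat.floor_natCast]
  rw [e1, e2, c1, c2, ← card_class_eq C J hJ n]
  push_cast; ring

end NumberFieldPart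

/-- For a fixed number field `L` of degree `d` there is a constant depending only on `L`
such that for all `X > 0` and all real `α` with a rational approximation of denominator `q`:
`|Σ_{N(𝔞) ≤ X} e(α·N(𝔞))| = O(X·(1/q + X^{−1/d} + q/X)^{10^{−d}/2})`, the sum over nonzero
ideals of `𝓞 L` of norm at most `X`. -/
theorem ideal_exp_sum_bound (L : Type*) [Field L] [NumberField L]
    (d : ℕ) (hd : d = Module.finrank ℚ L) :
    ∃ Cst : ℝ, 0 < Cst ∧ ∀ X : ℝ, 0 < X → ∀ (α : ℝ) (q : ℕ), HasRatApprox α q →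
      ‖∑ᶠ I : Ideal (𝓞 L),
          if I ≠ ⊥ ∧ (Ideal.absNorm I : ℝ) ≤ X then eF (α * (Ideal.absNorm I : ℝ)) else 0‖
        ≤ Cst * X *
            ((1 / q + X ^ (-(1 : ℝ) / d) + q / X) ^ (((10 : ℝ) ^ d)⁻¹ / 2)) := by
  subst hd
  choose J hJ using fun C : ClassGroup (𝓞 L) ↦ ClassGroup.mk0_surjective C⁻¹
  choose Cst hC0 hC using fun C ↦ ideal_box_bound (J C)
  refine ⟨∑ C, Cst C + 1, by have := Finset.sum_nonneg fun C (_ : C ∈ Finset.univ) ↦ hC0 C; linarith,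
    fun X hX0 α q hα ↦ ?_⟩
  have hq : (0 : ℝ) < q := by exact_mod_cast pos_of_hasRatApprox hα
  set Δ := 1 / q + X ^ (-(1 : ℝ) / (Module.finrank ℚ L : ℕ)) + q / X with hΔ
  have hXr : 0 < X ^ (-(1 : ℝ) / (Module.finrank ℚ L : ℕ)) := Real.rpow_pos_of_pos hX0 _
  have hΔ1 : 1 / q + q / X ≤ Δ := by rw [hΔ]; linarith
  have hΔ0 : 0 < Δ := lt_of_lt_of_le (by positivity) hΔ1
  have hCsum : 0 ≤ ∑ C, Cst C := Finset.sum_nonneg fun C _ ↦ hC0 C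
  have hfin := Ideal.finite_setOfPred_absNorm_le₀ (S := 𝓞 L) ⌊X⌋₊
  set S0 := hfin.toFinset with hS0
  have hS0m : ∀ I, I ∈ S0 ↔ (Ideal.absNorm (I : Ideal (𝓞 L)) : ℝ) ≤ X := by
    intro I
    rw [hS0, Set.Finite.mem_toFinset, ← Nat.le_floor_iff hX0.le]; rfl
  have hsum : (∑ᶠ I : Ideal (𝓞 L),
      if I ≠ ⊥ ∧ (Ideal.absNorm I : ℝ) ≤ X then eF (α * (Ideal.absNorm I : ℝ)) else 0) =
      ∑ I ∈ S0, eF (α * (Ideal.absNorm (I : Ideal (𝓞 L)) : ℝ)) := by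
    rw [finsum_eq_sum_of_support_subset (s := S0.image Subtype.val),
      Finset.sum_image fun _ _ _ _ h ↦ Subtype.ext h]
    · refine Finset.sum_congr rfl fun I hI ↦ if_pos ⟨nonZeroDivisors.coe_ne_zero I, (hS0m I).mp hI⟩
    · intro I hI
      have h1 : I ≠ ⊥ ∧ (Ideal.absNorm I : ℝ) ≤ X := by
        by_contra h
        exact hI (if_neg h)
      rw [Finset.mem_coe, Finset.mem_image]
      exact ⟨⟨I, mem_nonZeroDivisors_of_ne_zero h1.1⟩, (hS0m _).mpr h1.2, rfl⟩
  rw [hsum]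
  rcases lt_or_ge X 1 with hX1 | hX1
  · have : S0 = ∅ := by
      rw [Finset.eq_empty_iff_forall_notMem]
      intro I hI
      have h1 := (hS0m I).mp hI
      have h2 : (1 : ℝ) ≤ Ideal.absNorm (I : Ideal (𝓞 L)) := by
        exact_mod_cast Ideal.absNorm_pos_of_nonZeroDivisors I
      linarith
    rw [this, Finset.sum_empty, norm_zero]
    positivity
  rw [← Finset.sum_fiberwise S0 (fun I ↦ ClassGroup.mk0 I)]
  have hclass : ∀ C : ClassGroup (𝓞 L),
      ‖∑ I ∈ S0 with ClassGroup.mk0 I = C, eF (α * (Ideal.absNorm (I : Ideal (𝓞 L)) : ℝ))‖ ≤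
        Cst C * X * Δ ^ (((10 : ℝ) ^ Module.finrank ℚ L)⁻¹ / 2) := by
    intro C
    obtain ⟨T, hT, hbound⟩ := hC C X hX1 α q hα Δ hΔ1
    rw [← class_sum_eq C (J C) (hJ C) X hX1 α (S0.filter fun I ↦ ClassGroup.mk0 I = C)
      (fun I ↦ by rw [Finset.mem_filter, hS0m]) T hT, norm_mul, Complex.norm_natCast] at hbound
    refine le_trans (le_mul_of_one_le_right (norm_nonneg _) ?_) hbound
    exact_mod_cast Nat.one_le_iff_ne_zero.mpr (Units.torsionOrder_ne_zero L)
  refine (norm_sum_le _ _).trans ((Finset.sum_le_sum fun C _ ↦ hclass C).trans ?_)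
  rw [← Finset.sum_mul, ← Finset.sum_mul]
  gcongr
  linarith
end
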